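/- Let d ≥ 3 be a fixed integer and p an odd prime with gcd(p,d) = 1. For every ε > 0 there exists N such that for all n ≥ N with nd even, the number of fixed-point-free involutions σ of [n]×[d] for which the matrix A(σ), reduced modulo p, is singular over F_p (i.e., has determinant 0 in F_p) is at most ((1+ε)/(p−1))·(nd)!/(2^{nd/2}(nd/2)!). -/

import Mathlib

open Finset

/-- Adjacency matrix of the configuration model. -/
def adjMat (n d : ℕ) (σ : Equiv.Perm (Fin n × Fin d)) : Matrix (Fin n) (Fin n) ℤ :=
  fun k l => ((Finset.univ.filter (fun i : Fin d => (σ (k, i)).1 = l)).card : ℤ)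

section Matchings
variable {X : Type*} [Fintype X] [DecidableEq X]

/-- involutions whose set of moved points is exactly `Y`. -/
def msetU (Y : Finset X) : Finset (Equiv.Perm X) :=
  Finset.univ.filter (fun σ => (∀ x, σ (σ x) = x) ∧ ∀ x, σ x ≠ x ↔ x ∈ Y)

def mcountU : ℕ → ℕ
  | 0 => 1
  | 1 => 0
  | (k+2) => (k+1) * mcountU k

lemma mem_msetU {Y : Finset X} {σ : Equiv.Perm X} :
    σ ∈ msetU Y ↔ (∀ x, σ (σ x) = x) ∧ ∀ x, σ x ≠ x ↔ x ∈ Y := by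
  simp [msetU]

lemma msetU_empty : msetU (∅ : Finset X) = {1} := by
  ext σ
  rw [mem_msetU, mem_singleton]
  constructor
  · rintro ⟨_, h2⟩
    ext x
    by_contra h
    exact absurd ((h2 x).1 h) (by simp)
  · rintro rfl
    simp

lemma swap_mul_mem {Y : Finset X} {x y : X} (hx : x ∈ Y) (hy : y ∈ Y.erase x)
    {τ : Equiv.Perm X} (hτ : τ ∈ msetU ((Y.erase x).erase y)) :
    Equiv.swap x y * τ ∈ msetU Y := by
  rw [mem_msetU] at hτ ⊢
  obtain ⟨h1, h2⟩ := hτ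
  have hyx : y ≠ x := (Finset.mem_erase.1 hy).1
  have hyY : y ∈ Y := (Finset.mem_erase.1 hy).2
  have hfx : τ x = x := by
    by_contra h
    have := (h2 x).1 h
    simp at this
  have hfy : τ y = y := by
    by_contra h
    have := (h2 y).1 h
    simp at this
  have hother : ∀ z, z ≠ x → z ≠ y → (Equiv.swap x y) (τ z) = τ z ∧ τ z ≠ x ∧ τ z ≠ y := by
    intro z hzx hzy
    have a : τ z ≠ x := fun h => hzx (τ.injective (h.trans hfx.symm))
    have b : τ z ≠ y := fun h => hzy (τ.injective (h.trans hfy.symm))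
    exact ⟨Equiv.swap_apply_of_ne_of_ne a b, a, b⟩
  constructor
  · intro z
    simp only [Equiv.Perm.mul_apply]
    by_cases hzx : z = x
    · subst hzx; simp [hfx, hfy]
    by_cases hzy : z = y
    · subst hzy; simp [hfx, hfy]
    obtain ⟨e, a, b⟩ := hother z hzx hzy
    rw [e, (hother _ a b).1, h1]
  · intro z
    simp only [Equiv.Perm.mul_apply]
    by_cases hzx : z = x
    · subst hzx; simp [hfx, hx, hyx]
    by_cases hzy : z = y
    · subst hzy; simp [hfy, hyY, Ne.symm hyx]
    rw [(hother z hzx hzy).1, h2]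
    simp [hzx, hzy]

lemma swap_mul_mem' {Y : Finset X} {x : X} (hx : x ∈ Y)
    {σ : Equiv.Perm X} (hσ : σ ∈ msetU Y) :
    σ x ∈ Y.erase x ∧ Equiv.swap x (σ x) * σ ∈ msetU ((Y.erase x).erase (σ x)) := by
  rw [mem_msetU] at hσ ⊢
  obtain ⟨h1, h2⟩ := hσ
  have hne : σ x ≠ x := (h2 x).2 hx
  have hy : σ x ∈ Y := (h2 _).1 (by rw [h1]; exact hne.symm)
  refine ⟨Finset.mem_erase.2 ⟨hne, hy⟩, ?_⟩
  have hother : ∀ z, z ≠ x → z ≠ σ x → (Equiv.swap x (σ x)) (σ z) = σ z ∧ σ z ≠ x ∧ σ z ≠ σ x := by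
    intro z hzx hzy
    have a : σ z ≠ x := fun h => hzy (by rw [← h, h1])
    have b : σ z ≠ σ x := fun h => hzx (σ.injective h)
    exact ⟨Equiv.swap_apply_of_ne_of_ne a b, a, b⟩
  constructor
  · intro z
    simp only [Equiv.Perm.mul_apply]
    by_cases hzx : z = x
    · subst hzx; simp
    by_cases hzy : z = σ x
    · subst hzy; simp [h1]
    obtain ⟨e, a, b⟩ := hother z hzx hzy
    rw [e, (hother _ a b).1, h1]
  · intro z
    simp only [Equiv.Perm.mul_apply]
    by_cases hzx : z = x
    · subst hzx; simp
    by_cases hzy : z = σ x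
    · subst hzy; simp [h1]
    rw [(hother z hzx hzy).1, h2]
    simp [hzx, hzy]

lemma sum_msetU {β : Type*} [AddCommMonoid β] {Y : Finset X} {x : X} (hx : x ∈ Y)
    (f : Equiv.Perm X → β) :
    ∑ σ ∈ msetU Y, f σ =
      ∑ y ∈ Y.erase x, ∑ τ ∈ msetU ((Y.erase x).erase y), f (Equiv.swap x y * τ) := by
  rw [Finset.sum_sigma']
  refine Finset.sum_bij' (fun σ _ => (⟨σ x, Equiv.swap x (σ x) * σ⟩ : (_ : X) × Equiv.Perm X))
    (fun q _ => Equiv.swap x q.1 * q.2) ?_ ?_ ?_ ?_ ?_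
  · intro σ hσ
    exact Finset.mem_sigma.2 (swap_mul_mem' hx hσ)
  · rintro ⟨y, τ⟩ h
    obtain ⟨hy, hτ⟩ := Finset.mem_sigma.1 h
    exact swap_mul_mem hx hy hτ
  · intro σ hσ
    simp [← mul_assoc]
  · rintro ⟨y, τ⟩ h
    obtain ⟨hy, hτ⟩ := Finset.mem_sigma.1 h
    have hfx : τ x = x := by
      by_contra h
      have := ((mem_msetU.1 hτ).2 x).1 h
      simp at this
    have : (Equiv.swap x y * τ) x = y := by simp [hfx]
    simp only [this]
    simp [← mul_assoc]
  · intro σ hσ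
    simp [← mul_assoc]

lemma card_msetU (Y : Finset X) : (msetU Y).card = mcountU Y.card := by
  induction h : Y.card using Nat.strong_induction_on generalizing Y with
  | _ k ih =>
    rcases Y.eq_empty_or_nonempty with rfl | ⟨x, hx⟩
    · rw [msetU_empty]; simp at h; subst h; rfl
    · rw [Finset.card_eq_sum_ones, sum_msetU hx]
      have h2 : ∀ y ∈ Y.erase x, ∑ τ ∈ msetU ((Y.erase x).erase y), 1 = mcountU (k-2) := by
        intro y hy
        rw [← Finset.card_eq_sum_ones]
        have hc : ((Y.erase x).erase y).card = k - 2 := by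
          rw [card_erase_of_mem hy, card_erase_of_mem hx, h]; omega
        have hpos : 0 < Y.card := card_pos.2 ⟨x, hx⟩
        exact ih (k-2) (by omega) _ hc
      rw [Finset.sum_congr rfl h2, Finset.sum_const, card_erase_of_mem hx, h, smul_eq_mul]
      have hpos : 0 < Y.card := card_pos.2 ⟨x, hx⟩
      match k, h with
      | 0, h => omega
      | 1, h => simp [mcountU]
      | (k+2), h => simp [mcountU]

lemma mcountU_formula (k : ℕ) : mcountU (2*k) * (2^k * k.factorial) = (2*k).factorial := by
  induction k with
  | zero => simp [mcountU]
  | succ k ih =>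
    have : 2 * (k+1) = 2*k+2 := by ring
    rw [this, mcountU, Nat.factorial_succ (2*k+1), Nat.factorial_succ (2*k), ← ih,
      Nat.factorial_succ k]
    ring

lemma mcountU_pos (k : ℕ) : 0 < mcountU (2*k) := by
  by_contra h
  have h0 : mcountU (2*k) = 0 := by omega
  have := mcountU_formula k
  rw [h0, zero_mul] at this
  exact (Nat.factorial_pos (2*k)).ne this

lemma card_msetU_erase {Y : Finset X} {x y : X} (hx : x ∈ Y) (hy : y ∈ Y.erase x) :
    (msetU Y).card = (Y.card - 1) * (msetU ((Y.erase x).erase y)).card := by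
  rw [card_msetU, card_msetU, card_erase_of_mem hy, card_erase_of_mem hx]
  have h1 : 0 < Y.card := card_pos.2 ⟨x, hx⟩
  have h2 : 0 < (Y.erase x).card := card_pos.2 ⟨y, hy⟩
  rw [card_erase_of_mem hx] at h2
  obtain ⟨k, hk⟩ : ∃ k, Y.card = k + 2 := ⟨Y.card - 2, by omega⟩
  rw [hk]
  simp [mcountU]

end Matchings

section Exposure
variable {X : Type*} [Fintype X] [DecidableEq X] {I : Type*} [DecidableEq I]

def extU (D : Finset X) (Y : Finset X) (σ : Equiv.Perm X) : Finset X :=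
  (D ∩ Y).filter (fun x => σ x ∉ D)

def intU (D : Finset X) (Y : Finset X) (σ : Equiv.Perm X) : Finset X :=
  (D ∩ Y).filter (fun x => σ x ∈ D)

def newU (π : X → I) (D : Finset X) (Y : Finset X) (τ : Finset I) (σ : Equiv.Perm X) : Finset I :=
  ((extU D Y σ).image (fun x => π (σ x))) \ τ

def expoU (π : X → I) (D : Finset X) (Y : Finset X) (τ : Finset I) (σ : Equiv.Perm X) : ℕ :=
  2 * (newU π D Y τ σ).card + (intU D Y σ).card

lemma swap_facts {Y : Finset X} {x y : X} 
    {τ : Equiv.Perm X} (hτ : τ ∈ msetU ((Y.erase x).erase y)) :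
    (Equiv.swap x y * τ) x = y ∧ (Equiv.swap x y * τ) y = x ∧
    ∀ z ∈ (Y.erase x).erase y, (Equiv.swap x y * τ) z = τ z := by
  rw [mem_msetU] at hτ
  obtain ⟨h1, h2⟩ := hτ
  have hfx : τ x = x := by
    by_contra h
    have := (h2 x).1 h
    simp at this
  have hfy : τ y = y := by
    by_contra h
    have := (h2 y).1 h
    simp at this
  refine ⟨by simp [hfx], by simp [hfy], ?_⟩
  intro z hz
  have hz' := hz
  simp only [mem_erase] at hz
  have a : τ z ≠ x := fun h => hz.2.1 (τ.injective (h.trans hfx.symm))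
  have b : τ z ≠ y := fun h => hz.1 (τ.injective (h.trans hfy.symm))
  exact Equiv.swap_apply_of_ne_of_ne a b

lemma expo_case1 (π : X → I) {D Y : Finset X} {τ : Finset I} {x y : X} (hx : x ∈ D ∩ Y)
    (hy : y ∈ Y.erase x) (hyD : y ∈ D) {σ : Equiv.Perm X}
    (hσ : σ ∈ msetU ((Y.erase x).erase y)) :
    2 + expoU π D ((Y.erase x).erase y) τ σ ≤ expoU π D Y τ (Equiv.swap x y * σ) := by
  obtain ⟨f1, f2, f3⟩ := swap_facts hσ
  have hyx := (mem_erase.1 hy).1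
  have hyY := (mem_erase.1 hy).2
  have hxD := (mem_inter.1 hx).1
  have hxY := (mem_inter.1 hx).2
  set Y' := (Y.erase x).erase y with hY'
  have hsub : ∀ z ∈ Y', z ∈ Y := fun z hz => (mem_erase.1 (mem_erase.1 hz).2).2
  have hnew : (newU π D Y' τ σ).card ≤ (newU π D Y τ (Equiv.swap x y * σ)).card := by
    apply card_le_card
    intro k hk
    simp only [newU, extU, mem_sdiff, mem_image, mem_filter, mem_inter] at hk ⊢
    obtain ⟨⟨z, ⟨⟨hzD, hzY⟩, hz⟩, hzk⟩, hkτ⟩ := hk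
    exact ⟨⟨z, ⟨⟨hzD, hsub z hzY⟩, by rw [f3 z hzY]; exact hz⟩, by rw [f3 z hzY]; exact hzk⟩, hkτ⟩
  have hcard_int : (intU D Y' σ).card + 2 ≤ (intU D Y (Equiv.swap x y * σ)).card := by
    have hxn : x ∉ insert y (intU D Y' σ) := by
      simp [intU, hY', Ne.symm hyx]
    have hyn : y ∉ intU D Y' σ := by
      simp [intU, hY']
    have : (insert x (insert y (intU D Y' σ))).card = (intU D Y' σ).card + 2 := by
      rw [card_insert_of_notMem hxn, card_insert_of_notMem hyn]
    rw [← this]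
    apply card_le_card
    intro z hz
    rw [mem_insert, mem_insert] at hz
    simp only [intU, mem_filter, mem_inter] at hz ⊢
    rcases hz with rfl | rfl | ⟨⟨hzD, hzY⟩, hz⟩
    · exact ⟨⟨hxD, hxY⟩, by rw [f1]; exact hyD⟩
    · exact ⟨⟨hyD, hyY⟩, by rw [f2]; exact hxD⟩
    · exact ⟨⟨hzD, hsub z hzY⟩, by rw [f3 z hzY]; exact hz⟩
  unfold expoU
  omega

lemma expo_case2 (π : X → I) {D Y : Finset X} {τ : Finset I} {x y : X} {σ : Equiv.Perm X}
    (hσ : σ ∈ msetU ((Y.erase x).erase y)) :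
    expoU π D ((Y.erase x).erase y) τ σ ≤ expoU π D Y τ (Equiv.swap x y * σ) := by
  obtain ⟨f1, f2, f3⟩ := swap_facts hσ
  set Y' := (Y.erase x).erase y with hY'
  have hsub : ∀ z ∈ Y', z ∈ Y := fun z hz => (mem_erase.1 (mem_erase.1 hz).2).2
  have hnew : (newU π D Y' τ σ).card ≤ (newU π D Y τ (Equiv.swap x y * σ)).card := by
    apply card_le_card
    intro k hk
    simp only [newU, extU, mem_sdiff, mem_image, mem_filter, mem_inter] at hk ⊢
    obtain ⟨⟨z, ⟨⟨hzD, hzY⟩, hz⟩, hzk⟩, hkτ⟩ := hk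
    exact ⟨⟨z, ⟨⟨hzD, hsub z hzY⟩, by rw [f3 z hzY]; exact hz⟩, by rw [f3 z hzY]; exact hzk⟩, hkτ⟩
  have hcard_int : (intU D Y' σ).card ≤ (intU D Y (Equiv.swap x y * σ)).card := by
    apply card_le_card
    intro z hz
    simp only [intU, mem_filter, mem_inter] at hz ⊢
    obtain ⟨⟨hzD, hzY⟩, hz⟩ := hz
    exact ⟨⟨hzD, hsub z hzY⟩, by rw [f3 z hzY]; exact hz⟩
  unfold expoU
  omega

lemma expo_case3 (π : X → I) {D Y : Finset X} {τ : Finset I} {x y : X} (hx : x ∈ D ∩ Y)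
    (hyD : y ∉ D) (hyτ : π y ∉ τ) {σ : Equiv.Perm X}
    (hσ : σ ∈ msetU ((Y.erase x).erase y)) :
    2 + expoU π D ((Y.erase x).erase y) (insert (π y) τ) σ ≤
      expoU π D Y τ (Equiv.swap x y * σ) := by
  obtain ⟨f1, f2, f3⟩ := swap_facts hσ
  have hxD := (mem_inter.1 hx).1
  have hxY := (mem_inter.1 hx).2
  set Y' := (Y.erase x).erase y with hY'
  have hsub : ∀ z ∈ Y', z ∈ Y := fun z hz => (mem_erase.1 (mem_erase.1 hz).2).2
  have hnew : (newU π D Y' (insert (π y) τ) σ).card + 1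
      ≤ (newU π D Y τ (Equiv.swap x y * σ)).card := by
    have hn : π y ∉ newU π D Y' (insert (π y) τ) σ := by simp [newU]
    rw [← card_insert_of_notMem hn]
    apply card_le_card
    intro k hk
    rw [mem_insert] at hk
    simp only [newU, extU, mem_sdiff, mem_image, mem_filter, mem_inter, mem_insert] at hk ⊢
    rcases hk with rfl | ⟨⟨z, ⟨⟨hzD, hzY⟩, hz⟩, hzk⟩, hkτ⟩
    · exact ⟨⟨x, ⟨⟨hxD, hxY⟩, by rw [f1]; exact hyD⟩, by rw [f1]⟩, hyτ⟩
    · exact ⟨⟨z, ⟨⟨hzD, hsub z hzY⟩, by rw [f3 z hzY]; exact hz⟩, by rw [f3 z hzY]; exact hzk⟩,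
        fun h => hkτ (Or.inr h)⟩
  have hcard_int : (intU D Y' σ).card ≤ (intU D Y (Equiv.swap x y * σ)).card := by
    apply card_le_card
    intro z hz
    simp only [intU, mem_filter, mem_inter] at hz ⊢
    obtain ⟨⟨hzD, hzY⟩, hz⟩ := hz
    exact ⟨⟨hzD, hsub z hzY⟩, by rw [f3 z hzY]; exact hz⟩
  unfold expoU
  omega

lemma exposure (π : X → I) (d : ℕ) (hd : 1 ≤ d)
    (hπ : ∀ k, (univ.filter (fun x => π x = k)).card ≤ d) (D : Finset X)
    (L b : ℕ) (κ : ℝ) (hκ0 : 0 < κ) (hκ1 : κ ≤ 1)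
    (hLb : ((d * L : ℕ) : ℝ) ≤ κ ^ 2 * b) :
    ∀ ℓ : ℕ, ∀ (Y : Finset X) (τ : Finset I), (D ∩ Y).card = ℓ → τ.card + ℓ ≤ L →
      2 * ℓ + b ≤ Y.card →
      ∑ σ ∈ msetU Y, κ ^ (expoU π D Y τ σ) ≤ (msetU Y).card * (3 * κ ^ 2) ^ ℓ := by
  intro ℓ
  induction ℓ using Nat.strong_induction_on with
  | _ ℓ ih =>
  intro Y τ hℓ hτ hY
  rcases Nat.eq_zero_or_pos ℓ with h0 | hpos
  · subst h0
    calc ∑ σ ∈ msetU Y, κ ^ (expoU π D Y τ σ) ≤ ∑ σ ∈ msetU Y, (1:ℝ) :=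
          sum_le_sum (fun σ _ => pow_le_one₀ hκ0.le hκ1)
      _ = _ := by simp
  obtain ⟨x, hx⟩ : (D ∩ Y).Nonempty := card_pos.1 (by omega)
  have hxD := (mem_inter.1 hx).1
  have hxY := (mem_inter.1 hx).2
  rw [sum_msetU hxY]
  set Z : ℝ := (3 * κ ^ 2) ^ ℓ with hZ
  have hκ2 : 0 < κ ^ 2 := by positivity
  have hZ0 : 0 < Z := by positivity
  have hZ1 : (3 * κ ^ 2) ^ (ℓ - 1) = Z / (3 * κ^2) := by
    rw [hZ, eq_div_iff (by positivity), ← pow_succ]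
    congr 1; omega
  -- card of Y'
  have hYc : ∀ y ∈ Y.erase x, ((Y.erase x).erase y).card = Y.card - 2 := by
    intro y hy
    rw [card_erase_of_mem hy, card_erase_of_mem hxY]; omega
  have hM : ∀ y ∈ Y.erase x, ((msetU ((Y.erase x).erase y)).card : ℝ) =
      (mcountU (Y.card - 2) : ℝ) := by
    intro y hy
    rw [card_msetU, hYc y hy]
  have hDY : ∀ y, D ∩ ((Y.erase x).erase y) = ((D ∩ Y).erase x).erase y := by
    intro y; ext z; simp only [mem_inter, mem_erase]; tauto
  have hpt : ∀ y ∈ Y.erase x,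
      ∑ σ ∈ msetU ((Y.erase x).erase y), κ ^ (expoU π D Y τ (Equiv.swap x y * σ)) ≤
      (mcountU (Y.card - 2) : ℝ) *
        (Z / 3 + (if y ∈ D ∩ Y then Z / (9 * κ^2) else 0) + 
          (if π y ∈ τ then Z / (3 * κ^2) else 0)) := by
    intro y hy
    by_cases hyD : y ∈ D
    · have hyDY : y ∈ D ∩ Y := mem_inter.2 ⟨hyD, (mem_erase.1 hy).2⟩
      have hye : y ∈ (D ∩ Y).erase x := mem_erase.2 ⟨(mem_erase.1 hy).1, hyDY⟩
      have hcard : (D ∩ ((Y.erase x).erase y)).card = ℓ - 2 := by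
        rw [hDY, card_erase_of_mem hye, card_erase_of_mem hx, hℓ]; omega
      have hl2 : 2 ≤ ℓ := by
        have := card_pos.2 ⟨y, hye⟩
        rw [card_erase_of_mem hx, hℓ] at this; omega
      have key := ih (ℓ - 2) (by omega) ((Y.erase x).erase y) τ hcard (by omega)
        (by rw [hYc y hy]; omega)
      rw [hM y hy] at key
      have hZ2 : (3 * κ ^ 2) ^ (ℓ - 2) = Z / (3 * κ^2)^2 := by
        rw [hZ, eq_div_iff (by positivity), ← pow_add]
        congr 1; omega
      calc ∑ σ ∈ msetU ((Y.erase x).erase y), κ ^ (expoU π D Y τ (Equiv.swap x y * σ))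
          ≤ ∑ σ ∈ msetU ((Y.erase x).erase y), κ^2 * κ ^ (expoU π D ((Y.erase x).erase y) τ σ) := by
            apply sum_le_sum
            intro σ hσ
            rw [← pow_add]
            exact pow_le_pow_of_le_one hκ0.le hκ1 (expo_case1 π hx hy hyD hσ)
        _ ≤ κ^2 * ((mcountU (Y.card - 2) : ℝ) * (3 * κ ^ 2) ^ (ℓ - 2)) := by
            rw [← mul_sum]
            exact mul_le_mul_of_nonneg_left key hκ2.le
        _ = (mcountU (Y.card - 2) : ℝ) * (Z / (9 * κ^2)) := by
            rw [hZ2]; field_simp; ring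
        _ ≤ _ := by
            apply mul_le_mul_of_nonneg_left _ (Nat.cast_nonneg _)
            rw [if_pos hyDY]
            have : 0 ≤ (if π y ∈ τ then Z / (3 * κ^2) else 0) := by split_ifs <;> positivity
            have : 0 ≤ Z / 3 := by positivity
            linarith
    · have hcard : (D ∩ ((Y.erase x).erase y)).card = ℓ - 1 := by
        have : y ∉ (D ∩ Y).erase x := fun h => hyD (mem_inter.1 (mem_erase.1 h).2).1
        rw [hDY, erase_eq_of_notMem this, card_erase_of_mem hx, hℓ]
      by_cases hyτ : π y ∈ τ
      · have key := ih (ℓ - 1) (by omega) ((Y.erase x).erase y) τ hcard (by omega)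
          (by rw [hYc y hy]; omega)
        rw [hM y hy] at key
        calc ∑ σ ∈ msetU ((Y.erase x).erase y), κ ^ (expoU π D Y τ (Equiv.swap x y * σ))
            ≤ ∑ σ ∈ msetU ((Y.erase x).erase y), κ ^ (expoU π D ((Y.erase x).erase y) τ σ) := by
              apply sum_le_sum
              intro σ hσ
              exact pow_le_pow_of_le_one hκ0.le hκ1 (expo_case2 π hσ)
          _ ≤ _ := key
          _ ≤ _ := by
              apply mul_le_mul_of_nonneg_left _ (Nat.cast_nonneg _)
              rw [if_pos hyτ, hZ1]
              have : 0 ≤ (if y ∈ D ∩ Y then Z / (9 * κ^2) else 0) := by split_ifs <;> positivity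
              have : 0 ≤ Z / 3 := by positivity
              linarith
      · have hci : (insert (π y) τ).card ≤ τ.card + 1 := card_insert_le _ _
        have key := ih (ℓ - 1) (by omega) ((Y.erase x).erase y) (insert (π y) τ) hcard (by omega)
          (by rw [hYc y hy]; omega)
        rw [hM y hy] at key
        calc ∑ σ ∈ msetU ((Y.erase x).erase y), κ ^ (expoU π D Y τ (Equiv.swap x y * σ))
            ≤ ∑ σ ∈ msetU ((Y.erase x).erase y),
                κ^2 * κ ^ (expoU π D ((Y.erase x).erase y) (insert (π y) τ) σ) := by
              apply sum_le_sum
              intro σ hσ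
              rw [← pow_add]
              exact pow_le_pow_of_le_one hκ0.le hκ1 (expo_case3 π hx hyD hyτ hσ)
          _ ≤ κ^2 * ((mcountU (Y.card - 2) : ℝ) * (3 * κ ^ 2) ^ (ℓ - 1)) := by
              rw [← mul_sum]
              exact mul_le_mul_of_nonneg_left key hκ2.le
          _ = (mcountU (Y.card - 2) : ℝ) * (Z / 3) := by
              rw [hZ1]; field_simp
          _ ≤ _ := by
              apply mul_le_mul_of_nonneg_left _ (Nat.cast_nonneg _)
              have : 0 ≤ (if y ∈ D ∩ Y then Z / (9 * κ^2) else 0) := by split_ifs <;> positivity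
              have : 0 ≤ (if π y ∈ τ then Z / (3 * κ^2) else 0) := by split_ifs <;> positivity
              linarith
  refine (sum_le_sum hpt).trans ?_
  rw [← mul_sum, sum_add_distrib, sum_add_distrib, sum_const, ← sum_filter, ← sum_filter,
    sum_const, sum_const]
  have hMY : ((msetU Y).card : ℝ) = ((Y.card : ℝ) - 1) * mcountU (Y.card - 2) := by
    rw [card_msetU]
    obtain ⟨k, hk⟩ : ∃ k, Y.card = k + 2 := ⟨Y.card - 2, by omega⟩
    rw [hk]
    simp only [mcountU, Nat.add_sub_cancel]
    push_cast
    ring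
  rw [hMY]
  have c1 : ((Y.erase x).card : ℝ) = (Y.card : ℝ) - 1 := by
    rw [card_erase_of_mem hxY, Nat.cast_sub (by omega)]; simp
  have c2 : ((filter (fun y => y ∈ D ∩ Y) (Y.erase x)).card : ℝ) ≤ κ^2 * ((Y.card : ℝ) - 1) := by
    have : (filter (fun y => y ∈ D ∩ Y) (Y.erase x)).card ≤ (D ∩ Y).card :=
      card_le_card (fun z hz => (mem_filter.1 hz).2)
    have h3 : (filter (fun y => y ∈ D ∩ Y) (Y.erase x)).card ≤ d * L := by
      rw [hℓ] at this
      have h4 : L ≤ d * L := Nat.le_mul_of_pos_left _ hd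
      omega
    have h5 : (b : ℝ) ≤ (Y.card : ℝ) - 1 := by
      have : b + 1 ≤ Y.card := by omega
      have : (b : ℝ) + 1 ≤ (Y.card : ℝ) := by exact_mod_cast this
      linarith
    calc _ ≤ ((d * L : ℕ) : ℝ) := by exact_mod_cast h3
      _ ≤ κ^2 * b := hLb
      _ ≤ _ := mul_le_mul_of_nonneg_left h5 hκ2.le
  have c3 : ((filter (fun y => π y ∈ τ) (Y.erase x)).card : ℝ) ≤ κ^2 * ((Y.card : ℝ) - 1) := by
    have h3 : (filter (fun y => π y ∈ τ) (Y.erase x)).card ≤ d * L := by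
      calc _ ≤ d * τ.card := by
            apply card_le_mul_card_image_of_maps_to (f := π)
            · intro y hy; exact (mem_filter.1 hy).2
            · intro k hk
              refine (card_le_card ?_).trans (hπ k)
              intro y hy
              simp only [mem_filter] at hy ⊢
              exact ⟨mem_univ _, hy.2⟩
        _ ≤ d * L := Nat.mul_le_mul_left _ (by omega)
    have h5 : (b : ℝ) ≤ (Y.card : ℝ) - 1 := by
      have : b + 1 ≤ Y.card := by omega
      have : (b : ℝ) + 1 ≤ (Y.card : ℝ) := by exact_mod_cast this
      linarith
    calc _ ≤ ((d * L : ℕ) : ℝ) := by exact_mod_cast h3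
      _ ≤ κ^2 * b := hLb
      _ ≤ _ := mul_le_mul_of_nonneg_left h5 hκ2.le
  simp only [nsmul_eq_mul]
  rw [c1]
  set y1 := (Y.card : ℝ) - 1
  have hy1 : 0 ≤ y1 := by
    have : (1:ℝ) ≤ Y.card := by exact_mod_cast (by omega : 1 ≤ Y.card)
    simp only [y1]; linarith
  have e2 : ((filter (fun y => y ∈ D ∩ Y) (Y.erase x)).card : ℝ) * (Z / (9 * κ^2)) ≤ y1 * Z / 9 := by
    calc _ ≤ (κ^2 * y1) * (Z / (9 * κ^2)) := mul_le_mul_of_nonneg_right c2 (by positivity)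
      _ = _ := by field_simp
  have e3 : ((filter (fun y => π y ∈ τ) (Y.erase x)).card : ℝ) * (Z / (3 * κ^2)) ≤ y1 * Z / 3 := by
    calc _ ≤ (κ^2 * y1) * (Z / (3 * κ^2)) := mul_le_mul_of_nonneg_right c3 (by positivity)
      _ = _ := by field_simp
  have hm0 : (0:ℝ) ≤ mcountU (Y.card - 2) := Nat.cast_nonneg _
  have hyZ : 0 ≤ y1 * Z := by positivity
  calc _ ≤ (mcountU (Y.card - 2) : ℝ) * (y1 * Z) := by
        apply mul_le_mul_of_nonneg_left _ hm0
        linarith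
    _ = _ := by ring

/-- probability bound for doubled neighbourhoods. -/
lemma exposure_count (π : X → I) (d : ℕ) (hd : 1 ≤ d)
    (hπ : ∀ k, (univ.filter (fun x => π x = k)).card ≤ d) (D : Finset X)
    (b : ℕ) (κ : ℝ) (hκ0 : 0 < κ) (hκ1 : κ ≤ 1)
    (hLb : ((d * D.card : ℕ) : ℝ) ≤ κ ^ 2 * b) (hb : 2 * D.card + b ≤ Fintype.card X) :
    (((msetU (univ : Finset X)).filter (fun σ => 2 * (newU π D univ ∅ σ).card ≤
      (extU D univ σ).card)).card : ℝ) ≤ (msetU (univ : Finset X)).card * (3 * κ) ^ D.card := by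
  have h := exposure π d hd hπ D D.card b κ hκ0 hκ1 hLb D.card univ ∅ (by simp) (by simp)
    (by rwa [card_univ])
  have h2 : (((msetU (univ : Finset X)).filter (fun σ => 2 * (newU π D univ ∅ σ).card ≤
      (extU D univ σ).card)).card : ℝ) * κ ^ D.card ≤
      ∑ σ ∈ msetU (univ : Finset X), κ ^ (expoU π D univ ∅ σ) := by
    rw [← nsmul_eq_mul, ← sum_const]
    calc _ ≤ ∑ σ ∈ (msetU (univ : Finset X)).filter (fun σ => 2 * (newU π D univ ∅ σ).card ≤
      (extU D univ σ).card), κ ^ (expoU π D univ ∅ σ) := by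
          apply sum_le_sum
          intro σ hσ
          apply pow_le_pow_of_le_one hκ0.le hκ1
          have h1 := (mem_filter.1 hσ).2
          have h3 : (intU D univ σ).card + (extU D univ σ).card = (D ∩ univ).card := by
            simp only [intU, extU]
            exact card_filter_add_card_filter_not _
          have h4 : (D ∩ univ).card = D.card := by simp
          unfold expoU
          omega
      _ ≤ _ := by
          apply sum_le_sum_of_subset_of_nonneg (filter_subset _ _)
          intro i _ _
          positivity
  have hk : 0 < κ ^ D.card := by positivity
  have h3 := h2.trans h
  have : (3 * κ ^ 2) ^ D.card = (3 * κ) ^ D.card * κ ^ D.card := by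
    rw [← mul_pow]; congr 1; ring
  rw [this, ← mul_assoc] at h3
  exact le_of_mul_le_mul_right h3 hk
end Exposure

section NearRegion
variable {n d p : ℕ}

/-- `v` is in the kernel of the adjacency matrix mod `p`. -/
def kerU (σ : Equiv.Perm (Fin n × Fin d)) (v : Fin n → ZMod p) : Prop :=
  ∀ k, ∑ i : Fin d, v (σ (k, i)).1 = 0

def suppU (v : Fin n → ZMod p) : Finset (Fin n) := univ.filter (fun k => v k ≠ 0)

instance (σ : Equiv.Perm (Fin n × Fin d)) (v : Fin n → ZMod p) : Decidable (kerU σ v) := by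
  unfold kerU; infer_instance

def DU (d : ℕ) (v : Fin n → ZMod p) : Finset (Fin n × Fin d) := (suppU v) ×ˢ univ

lemma card_DU (v : Fin n → ZMod p) : (DU d v).card = (suppU v).card * d := by
  simp [DU]

lemma mem_DU (v : Fin n → ZMod p) (x : Fin n × Fin d) : x ∈ DU d v ↔ v x.1 ≠ 0 := by
  simp [DU, suppU]

lemma ker_double (σ : Equiv.Perm (Fin n × Fin d)) (hσ : σ ∈ msetU univ) (v : Fin n → ZMod p)
    (hk : kerU σ v) :
    2 * (newU Prod.fst (DU d v) univ ∅ σ).card ≤ (extU (DU d v) univ σ).card := by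
  have hinv := (mem_msetU.1 hσ).1
  apply mul_card_image_le_card_of_maps_to (f := fun x => (σ x).1)
  · intro x hx
    simp only [newU, sdiff_empty]
    exact mem_image_of_mem _ hx
  · intro k hkn
    simp only [newU, sdiff_empty, mem_image] at hkn
    obtain ⟨x, hx, hxk⟩ := hkn
    have hx' := hx
    simp only [extU, mem_filter, mem_inter, mem_univ, and_true, mem_DU, not_not] at hx
    obtain ⟨hx1, hx2⟩ := hx
    by_contra hlt
    have hle : (filter (fun a => (σ a).1 = k) (extU (DU d v) univ σ)).card ≤ 1 := by omega
    rw [card_le_one] at hle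
    have hsum := hk k
    rw [hxk] at hx2
    have hone : ∀ i : Fin d, i ≠ (σ x).2 → v (σ (k, i)).1 = 0 := by
      intro i hi
      by_contra hne
      have hmem : σ (k, i) ∈ filter (fun a => (σ a).1 = k) (extU (DU d v) univ σ) := by
        simp only [extU, mem_filter, mem_inter, mem_univ, and_true, mem_DU, not_not, hinv]
        exact ⟨hne, hx2⟩
      have hmem2 : x ∈ filter (fun a => (σ a).1 = k) (extU (DU d v) univ σ) :=
        mem_filter.2 ⟨hx', hxk⟩
      have := hle _ hmem _ hmem2
      apply hi
      rw [← this, hinv]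
    rw [Finset.sum_eq_single (σ x).2 (fun i _ hi => hone i hi) (by simp)] at hsum
    have : (k, (σ x).2) = σ x := by rw [← hxk]
    rw [this, hinv] at hsum
    exact hx1 hsum

lemma fst_fiber (k : Fin n) : (univ.filter (fun x : Fin n × Fin d => x.1 = k)).card ≤ d := by
  have : (univ.filter (fun x : Fin n × Fin d => x.1 = k)) = {k} ×ˢ univ := by
    ext ⟨a, b⟩; simp [eq_comm]
  rw [this]; simp

lemma ker_count (hd : 1 ≤ d) (v : Fin n → ZMod p) (s : ℕ) (hs : (suppU v).card = s) (hs1 : 1 ≤ s)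
    (hsn : 18 * (s * d) ≤ n) (κ : ℝ) (hκ : κ = Real.sqrt (2 * s * d / n)) :
    (((msetU (univ : Finset (Fin n × Fin d))).filter (fun σ => kerU σ v)).card : ℝ) ≤
      (msetU (univ : Finset (Fin n × Fin d))).card * (3 * κ) ^ (s * d) := by
  have hsd : 1 ≤ s * d := Nat.mul_pos hs1 hd
  have hn : (0:ℝ) < n := by
    have : 0 < n := by omega
    exact_mod_cast this
  have hs0 : (0:ℝ) < s := by exact_mod_cast hs1
  have hd0 : (0:ℝ) < d := by exact_mod_cast hd
  have hκ2 : κ ^ 2 = 2 * s * d / n := by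
    rw [hκ, Real.sq_sqrt (by positivity)]
  have hκ0 : 0 < κ := by rw [hκ]; apply Real.sqrt_pos.2; positivity
  have hsnR : 18 * ((s:ℝ) * d) ≤ n := by exact_mod_cast hsn
  have hκ1 : κ ≤ 1 := by
    have : κ ^ 2 ≤ 1 := by
      rw [hκ2, div_le_one hn]; nlinarith
    nlinarith
  have hDc : (DU d v).card = s * d := by rw [card_DU, hs]
  have hs4 : 4 * s ≤ n := by nlinarith
  have h2 : 2 * (s * d) ≤ n * d := by nlinarith
  have key := exposure_count (Prod.fst : Fin n × Fin d → Fin n) d hd fst_fiber (DU d v)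
    (n * d - 2 * (s * d)) κ hκ0 hκ1 (by
      rw [hDc, hκ2, Nat.cast_sub h2]
      push_cast
      rw [div_mul_eq_mul_div, le_div_iff₀ hn]
      have : 4 * (s:ℝ) ≤ n := by exact_mod_cast hs4
      nlinarith [mul_nonneg (mul_nonneg hs0.le hd0.le) (mul_nonneg hd0.le (sub_nonneg.2 this))])
    (by rw [hDc]; simp; omega)
  rw [hDc] at key
  refine le_trans ?_ key
  norm_cast
  apply card_le_card
  intro σ hσ
  rw [mem_filter] at hσ ⊢
  exact ⟨hσ.1, ker_double σ hσ.1 v hσ.2⟩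

lemma card_supp_eq [NeZero p] (s : ℕ) :
    (univ.filter (fun v : Fin n → ZMod p => (suppU v).card = s)).card ≤ n.choose s * p ^ s := by
  have h := card_eq_sum_card_fiberwise (f := fun v : Fin n → ZMod p => suppU v)
    (s := univ.filter (fun v : Fin n → ZMod p => (suppU v).card = s))
    (t := powersetCard s univ) (by
      intro v hv
      simp only [coe_filter, mem_univ, true_and, Set.mem_setOf_eq] at hv
      simp [mem_powersetCard, hv])
  rw [h]
  calc _ ≤ ∑ V ∈ powersetCard s (univ : Finset (Fin n)), p ^ s := by
        apply sum_le_sum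
        intro V hV
        rw [mem_powersetCard] at hV
        have : (Fintype.piFinset (fun k : Fin n => if k ∈ V then (univ : Finset (ZMod p)) else {0})).card
            = p ^ s := by
          rw [Fintype.card_piFinset]
          have : ∀ k : Fin n, (if k ∈ V then (univ : Finset (ZMod p)) else {0}).card =
              if k ∈ V then p else 1 := by
            intro k; split_ifs <;> simp [ZMod.card]
          simp_rw [this]
          rw [prod_ite_mem, univ_inter, prod_const, hV.2]
        rw [← this]
        apply card_le_card
        intro v hv
        rw [Fintype.mem_piFinset]
        intro k
        have hvV := (mem_filter.1 hv).2
        split_ifs with hk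
        · simp
        · rw [mem_singleton]
          by_contra hne
          apply hk
          rw [← hvV]
          simp [suppU, hne]
    _ = _ := by simp

lemma choose_bound (n s : ℕ) (hs : 1 ≤ s) : (n.choose s : ℝ) ≤ (3 * n / s) ^ s := by
  have h1 : (n.choose s : ℝ) ≤ (n:ℝ) ^ s / s.factorial := Nat.choose_le_pow_div s n
  have h2 : (s:ℝ)^s / s.factorial ≤ Real.exp s := Real.pow_div_factorial_le_exp s (by positivity) s
  have h3 : Real.exp s ≤ 3 ^ s := by
    rw [← Real.exp_one_pow]
    exact pow_le_pow_left₀ (Real.exp_pos _).le (by linarith [Real.exp_one_lt_d9]) s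
  have hs0 : (0:ℝ) < s := by exact_mod_cast hs
  have hf : (0:ℝ) < s.factorial := by exact_mod_cast Nat.factorial_pos s
  refine h1.trans ?_
  rw [div_pow, mul_pow, div_le_div_iff₀ hf (by positivity)]
  have := h2.trans h3
  rw [div_le_iff₀ hf] at this
  nlinarith [pow_nonneg (Nat.cast_nonneg (α := ℝ) n) s]

lemma sum_geom_aux (m : ℕ) : ∑ s ∈ range m, (s:ℝ) * (1/2)^(s-1) ≤ 4 := by
  have : ∀ m : ℕ, ∑ s ∈ range (m+1), (s:ℝ) * (1/2)^(s-1) = 4 - (m+2) * 2 * (1/2)^m := by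
    intro m
    induction m with
    | zero => simp; norm_num
    | succ m ih =>
      rw [sum_range_succ, ih]
      simp only [Nat.add_sub_cancel]
      push_cast
      rw [pow_succ]
      ring
  rcases m with _ | m
  · simp
  · rw [this]
    have : (0:ℝ) ≤ (m+2) * 2 * (1/2)^m := by positivity
    linarith

/-- near-constant vectors. -/
def nearU (δ : ℝ) (v : Fin n → ZMod p) : Prop :=
  ∃ a, ((univ.filter (fun k => v k ≠ a)).card : ℝ) ≤ δ * n

lemma near_nonzero_const [Fact p.Prime] (hgcd : Nat.gcd p d = 1) (hd : 1 ≤ d) (v : Fin n → ZMod p)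
    (σ : Equiv.Perm (Fin n × Fin d)) (hσ : σ ∈ msetU univ) (a : ZMod p) (ha : a ≠ 0)
    (h : (univ.filter (fun k => v k ≠ a)).card * d < n) : ¬ kerU σ v := by
  intro hk
  have hinv := (mem_msetU.1 hσ).1
  set D : Finset (Fin n × Fin d) := (univ.filter (fun k => v k ≠ a)) ×ˢ univ with hD
  have hDc : D.card = (univ.filter (fun k => v k ≠ a)).card * d := by simp [hD]
  have him : (D.image (fun x => (σ x).1)).card < (univ : Finset (Fin n)).card := by
    rw [card_univ, Fintype.card_fin]
    exact lt_of_le_of_lt card_image_le (by omega)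
  obtain ⟨k, _, hkn⟩ := exists_mem_notMem_of_card_lt_card him
  have hrow := hk k
  have hall : ∀ i : Fin d, v (σ (k, i)).1 = a := by
    intro i
    by_contra hne
    apply hkn
    rw [mem_image]
    refine ⟨σ (k, i), ?_, by rw [hinv]⟩
    simp [hD, hne]
  simp only [hall, sum_const, card_univ, Fintype.card_fin, nsmul_eq_mul] at hrow
  rcases mul_eq_zero.1 hrow with h0 | h0
  · rw [ZMod.natCast_eq_zero_iff] at h0
    have := Nat.dvd_gcd (dvd_refl p) h0
    rw [hgcd] at this
    exact (Fact.out : p.Prime).one_lt.ne' (Nat.dvd_one.1 this)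
  · exact ha h0

lemma near_term (hd : 3 ≤ d) [NeZero p] (s : ℕ) (hs1 : 1 ≤ s)
    (K : ℝ) (hK : K = 162 * d * p) 
    (hsn : 8 * d * K^2 * s ≤ n) :
    ∑ v : Fin n → ZMod p with (suppU v).card = s,
      (((msetU (univ : Finset (Fin n × Fin d))).filter (fun σ => kerU σ v)).card : ℝ) ≤
     (msetU (univ : Finset (Fin n × Fin d))).card *
        (K * Real.sqrt (2 * d / n) * (s * (1/2)^(s-1))) := by
  have hs0 : (1:ℝ) ≤ s := by exact_mod_cast hs1
  have hd0 : (3:ℝ) ≤ d := by exact_mod_cast hd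
  have hp0 : (1:ℝ) ≤ p := by exact_mod_cast (NeZero.pos p)
  have hK1 : 162 * 3 ≤ K := by rw [hK]; nlinarith [mul_nonneg (by linarith : (0:ℝ) ≤ d) (by linarith : (0:ℝ) ≤ (p:ℝ) - 1)]
  have hdK : (1:ℝ) ≤ d * K^2 * s := by
    have : (1:ℝ) ≤ K^2 := by nlinarith
    have : (1:ℝ) ≤ d * K^2 := by nlinarith
    nlinarith
  have hn : (0:ℝ) < n := by nlinarith
  set κ := Real.sqrt (2 * s * d / n) with hκ
  have hκ2 : κ ^ 2 = 2 * s * d / n := by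
    rw [hκ, Real.sq_sqrt (by positivity)]
  have hκ0 : 0 < κ := by rw [hκ]; apply Real.sqrt_pos.2; positivity
  have hKκ : K * κ ≤ 1/2 := by
    have : (K * κ)^2 ≤ (1/2)^2 := by
      rw [mul_pow, hκ2, ← mul_div_assoc, div_le_iff₀ hn]
      nlinarith
    exact (pow_le_pow_iff_left₀ (by positivity) (by norm_num) (by norm_num)).1 this
  have h3κ : 3 * κ ≤ 1 := by nlinarith
  have hsn18 : 18 * (s * d) ≤ n := by
    have : 18 * ((s:ℝ) * d) ≤ n := by
      have h0 : (0:ℝ) ≤ s * d := by positivity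
      have h1 : (18:ℝ) ≤ 8 * K^2 := by nlinarith
      nlinarith
    exact_mod_cast this
  set Mc : ℝ := ((msetU (univ : Finset (Fin n × Fin d))).card : ℝ) with hMc
  have hMc0 : 0 ≤ Mc := Nat.cast_nonneg _
  calc _ ≤ ∑ v : Fin n → ZMod p with (suppU v).card = s, Mc * (3 * κ) ^ (s * d) := by
        apply sum_le_sum
        intro v hv
        exact ker_count (by omega) v s (mem_filter.1 hv).2 hs1 hsn18 κ hκ
    _ = (univ.filter (fun v : Fin n → ZMod p => (suppU v).card = s)).card * (Mc * (3 * κ) ^ (s * d)) := by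
        rw [sum_const, nsmul_eq_mul]
    _ ≤ ((n.choose s * p ^ s : ℕ) : ℝ) * (Mc * (3 * κ) ^ (s * 3)) := by
        apply mul_le_mul
        · exact_mod_cast card_supp_eq s
        · apply mul_le_mul_of_nonneg_left _ hMc0
          exact pow_le_pow_of_le_one (by positivity) h3κ (Nat.mul_le_mul_left _ hd)
        · positivity
        · positivity
    _ ≤ ((3 * n / s) ^ s * p ^ s) * (Mc * (3 * κ) ^ (s * 3)) := by
        push_cast
        gcongr
        exact choose_bound n s hs1
    _ = Mc * (K * κ) ^ s := by
        have hns : (n:ℝ) / s = 2 * d / κ^2 := by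
          rw [hκ2]; field_simp
        rw [mul_div_assoc, hns, mul_comm s 3, pow_mul (3*κ), ← mul_assoc, mul_comm _ Mc, mul_assoc,
          ← mul_pow, ← mul_pow]
        congr 2
        rw [hK]; field_simp; ring
    _ ≤ _ := by
        apply mul_le_mul_of_nonneg_left _ hMc0
        obtain ⟨r, rfl⟩ : ∃ r, s = r + 1 := ⟨s - 1, by omega⟩
        rw [pow_succ, Nat.add_sub_cancel]
        have h1 : (K * κ) ^ r ≤ (1/2)^r := pow_le_pow_left₀ (by positivity) hKκ r
        have h2 : κ ≤ Real.sqrt (2 * d / n) * ((r+1 : ℕ):ℝ) := by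
          rw [hκ]
          have : 2 * ((r+1:ℕ):ℝ) * d / n = (2 * d / n) * ((r+1:ℕ):ℝ) := by ring
          rw [this, Real.sqrt_mul (by positivity)]
          apply mul_le_mul_of_nonneg_left _ (Real.sqrt_nonneg _)
          rw [Real.sqrt_le_left (by positivity)]
          nlinarith
        calc (K * κ) ^ r * (K * κ) ≤ (1/2)^r * (K * (Real.sqrt (2 * d / n) * ((r+1 : ℕ):ℝ))) := by
              gcongr
          _ = _ := by ring

lemma near_sum (hd : 3 ≤ d) [Fact p.Prime] (hgcd : Nat.gcd p d = 1)
    (K : ℝ) (hK : K = 162 * d * p) (δ : ℝ) (hδ : δ = 1 / (8 * d * K^2)) (hn : 1 ≤ n) :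
    ∑ v ∈ (univ : Finset (Fin n → ZMod p)).filter (fun v => ∃ a, ((univ.filter (fun k => v k ≠ a)).card : ℝ) ≤ δ * n),
      (((msetU (univ : Finset (Fin n × Fin d))).filter (fun σ => kerU σ v)).card : ℝ) ≤
     (msetU (univ : Finset (Fin n × Fin d))).card *
        (1 + 4 * K * Real.sqrt (2 * d / n)) := by
  have hd0 : (3:ℝ) ≤ d := by exact_mod_cast hd
  have hp0 : (1:ℝ) ≤ p := by exact_mod_cast (Fact.out : p.Prime).one_lt.le
  have hK1 : 162 * 3 ≤ K := by rw [hK]; nlinarith [mul_nonneg (by linarith : (0:ℝ) ≤ d) (by linarith : (0:ℝ) ≤ (p:ℝ) - 1)]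
  have hnR : (1:ℝ) ≤ n := by exact_mod_cast hn
  set Mc : ℝ := ((msetU (univ : Finset (Fin n × Fin d))).card : ℝ) with hMc
  have hMc0 : 0 ≤ Mc := Nat.cast_nonneg _
  set f : (Fin n → ZMod p) → ℝ := fun v =>
    (((msetU (univ : Finset (Fin n × Fin d))).filter (fun σ => kerU σ v)).card : ℝ) with hf
  have hf0 : ∀ v, 0 ≤ f v := fun v => Nat.cast_nonneg _
  have hden : 0 < 8 * d * K^2 := by positivity
  have hbig : (d:ℝ) < 8 * d * K^2 := by
    have : (1:ℝ) ≤ K^2 := by nlinarith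
    nlinarith
  set m := ⌊δ * n⌋₊ + 1 with hm
  have hδ0 : 0 ≤ δ * n := by rw [hδ]; positivity
  -- split
  have hsplit : ∀ v ∈ (univ : Finset (Fin n → ZMod p)).filter (fun v => ∃ a, ((univ.filter (fun k => v k ≠ a)).card : ℝ) ≤ δ * n),
      f v ≤ (if v = 0 then Mc else 0) + ∑ s ∈ range m, if (suppU v).card = s ∧ 1 ≤ s then f v else 0 := by
    intro v hv
    obtain ⟨a, ha⟩ := (mem_filter.1 hv).2
    have hnn : 0 ≤ ∑ s ∈ range m, if (suppU v).card = s ∧ 1 ≤ s then f v else 0 :=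
      sum_nonneg (fun s _ => by split_ifs; exacts [hf0 v, le_rfl])
    by_cases hv0 : v = 0
    · rw [if_pos hv0]
      have : f v ≤ Mc := by
        simp only [hf, hMc]; exact_mod_cast card_filter_le _ _
      linarith
    rw [if_neg hv0, zero_add]
    by_cases ha0 : a = 0
    · subst ha0
      have hs : (suppU v).card ∈ range m := by
        rw [mem_range, hm, Nat.lt_succ_iff]
        exact Nat.le_floor ha
      have h1 : 1 ≤ (suppU v).card := by
        by_contra h
        have : suppU v = ∅ := card_eq_zero.1 (by omega)
        apply hv0
        ext k
        by_contra hk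
        have : k ∈ suppU v := by simpa [suppU] using hk
        simp_all
      have := single_le_sum (f := fun s => if (suppU v).card = s ∧ 1 ≤ s then f v else 0)
        (fun s _ => by split_ifs; exacts [hf0 v, le_rfl]) hs
      simp only [true_and, h1, if_true] at this
      exact this
    · have : f v = 0 := by
        simp only [hf, Nat.cast_eq_zero, card_eq_zero]
        apply filter_eq_empty_iff.2
        intro σ hσ
        apply near_nonzero_const hgcd (by omega) v σ hσ a ha0
        have : ((univ.filter (fun k => v k ≠ a)).card : ℝ) * d < n := by
          have h1 : δ * d < 1 := by
            rw [hδ, one_div_mul_eq_div, div_lt_one hden]; exact hbig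
          have hd' : (0:ℝ) ≤ d := by linarith
          nlinarith [mul_le_mul_of_nonneg_right ha hd']
        exact_mod_cast this
      rw [this] at hnn ⊢
      exact hnn
  refine (sum_le_sum hsplit).trans ?_
  rw [sum_add_distrib, sum_comm]
  have h1 : ∑ v ∈ (univ : Finset (Fin n → ZMod p)).filter (fun v => ∃ a, ((univ.filter (fun k => v k ≠ a)).card : ℝ) ≤ δ * n),
      (if v = 0 then Mc else 0) ≤ Mc := by
    rw [sum_ite_eq']
    split_ifs <;> linarith
  have h2 : ∀ s ∈ range m, ∑ v ∈ (univ : Finset (Fin n → ZMod p)).filter (fun v => ∃ a, ((univ.filter (fun k => v k ≠ a)).card : ℝ) ≤ δ * n),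
      (if (suppU v).card = s ∧ 1 ≤ s then f v else 0) ≤
      Mc * (K * Real.sqrt (2 * d / n) * (s * (1/2)^(s-1))) := by
    intro s hs
    by_cases hs1 : 1 ≤ s
    · refine le_trans ?_ (near_term (p := p) hd s hs1 K hK ?_)
      · simp only [hs1, and_true]
        rw [sum_filter (fun v : Fin n → ZMod p => (suppU v).card = s)]
        apply sum_le_sum_of_subset_of_nonneg (filter_subset _ _)
        intro v _ _
        split_ifs; exacts [hf0 v, le_rfl]
      · have : s ≤ ⌊δ * n⌋₊ := by rw [mem_range, hm] at hs; omega
        have h3 := (Nat.le_floor_iff hδ0).1 this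
        rw [hδ, one_div_mul_eq_div, le_div_iff₀ hden] at h3
        linarith
    · simp only [hs1, and_false, if_false, sum_const_zero]
      positivity
  have h3 := sum_le_sum h2
  rw [← mul_sum, ← mul_sum] at h3
  have h4 := sum_geom_aux m
  have h5 : Mc * (K * Real.sqrt (2 * d / n) * ∑ s ∈ range m, (s:ℝ) * (1/2)^(s-1)) ≤ 
      Mc * (K * Real.sqrt (2 * d / n) * 4) := by
    gcongr
  calc _ ≤ Mc + Mc * (K * Real.sqrt (2 * d / n) * 4) := add_le_add h1 (h3.trans h5)
    _ = _ := by ring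

end NearRegion

set_option linter.unusedSectionVars false
section EdgeProduct
variable {X C : Type} [Fintype X] [DecidableEq X] [Fintype C] [DecidableEq C]

def edgeSum (w : C → C → ℂ) (c : X → C) : ℂ :=
  ∑ σ ∈ msetU (univ : Finset X), ∏ x, w (c x) (c (σ x))

lemma edge_product (σ : Equiv.Perm X) (hσ : σ ∈ msetU (univ : Finset X)) (w : C → C → ℂ) (y : C → ℂ) :
    ∑ c : X → C, ∏ x, (y (c x) * w (c x) (c (σ x))) =
      (∑ u, ∑ u', w u u' * w u' u * y u * y u') ^ (Fintype.card X / 2) := by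
  have hinv := (mem_msetU.1 hσ).1
  have hne : ∀ x, σ x ≠ x := fun x => ((mem_msetU.1 hσ).2 x).2 (mem_univ x)
  obtain ⟨N, ⟨o⟩⟩ : ∃ N, Nonempty (X ≃ Fin N) := ⟨_, ⟨Fintype.equivFin X⟩⟩
  let T := {x : X // o x < o (σ x)}
  let g : T × Bool → X := fun q => if q.2 then σ q.1.1 else q.1.1
  have hg : Function.Bijective g := by
    constructor
    · rintro ⟨⟨x, hx⟩, b⟩ ⟨⟨y, hy⟩, b'⟩ h
      cases b <;> cases b' <;> simp only [g, Bool.false_eq_true, if_false, if_true] at h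
      · subst h; rfl
      · subst h; rw [hinv] at hx; exact absurd hx (lt_asymm hy)
      · subst h; rw [hinv] at hy; exact absurd hx (lt_asymm hy)
      · have := σ.injective h; subst this; rfl
    · intro x
      rcases lt_trichotomy (o x) (o (σ x)) with h | h | h
      · exact ⟨(⟨x, h⟩, false), by simp [g]⟩
      · exact absurd (o.injective h).symm (hne x)
      · exact ⟨(⟨σ x, by rw [hinv]; exact h⟩, true), by simp [g, hinv]⟩
  let E : T × Bool ≃ X := Equiv.ofBijective g hg
  have hcard : Fintype.card T = Fintype.card X / 2 := by
    rw [← Fintype.card_congr E, Fintype.card_prod, Fintype.card_bool]; omega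
  let F : (T → C × C) ≃ (X → C) := 
    (Equiv.arrowProdEquivProdArrow T (fun _ => C) (fun _ => C)).trans
     { toFun := fun q x => if (E.symm x).2 then q.2 (E.symm x).1 else q.1 (E.symm x).1
       invFun := fun c => (fun t => c (E (t, false)), fun t => c (E (t, true)))
       left_inv := by rintro ⟨a, b⟩; simp
       right_inv := by
         intro c; ext x
         obtain ⟨⟨t, b⟩, rfl⟩ := E.surjective x
         cases b <;> simp }
  have hF1 : ∀ q t, F q (E (t, false)) = (q t).1 := by intro q t; simp [F, Equiv.arrowProdEquivProdArrow]
  have hF2 : ∀ q t, F q (E (t, true)) = (q t).2 := by intro q t; simp [F, Equiv.arrowProdEquivProdArrow]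
  have hE1 : ∀ t, σ (E (t, false)) = E (t, true) := by intro t; simp [E, g]
  have hE2 : ∀ t, σ (E (t, true)) = E (t, false) := by intro t; simp [E, g, hinv]
  rw [← F.sum_comp]
  have key : ∀ q : T → C × C, ∏ x, (y (F q x) * w (F q x) (F q (σ x))) =
      ∏ t, (w (q t).1 (q t).2 * w (q t).2 (q t).1 * y (q t).1 * y (q t).2) := by
    intro q
    rw [← E.prod_comp, Fintype.prod_prod_type]
    apply prod_congr rfl
    intro t _
    rw [Fintype.prod_bool, hE1, hE2, hF1, hF2]; ring
  simp_rw [key]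
  rw [← hcard, ← Fintype.sum_prod_type', ← Finset.card_univ, ← Finset.prod_const,
    Finset.prod_univ_sum]
  simp

lemma edgeSum_comp (w : C → C → ℂ) (c : X → C) (π : Equiv.Perm X) :
    edgeSum w (c ∘ π) = edgeSum w c := by
  unfold edgeSum
  refine Finset.sum_bij' (fun σ _ => π * σ * π⁻¹) (fun σ _ => π⁻¹ * σ * π) ?_ ?_ ?_ ?_ ?_
  · intro σ hσ
    rw [mem_msetU] at hσ ⊢
    refine ⟨fun x => by simp [hσ.1], fun x => ?_⟩
    have := (hσ.2 (π⁻¹ x)).2 (mem_univ _)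
    simp only [mem_univ, iff_true]
    intro h
    apply this
    apply π.injective
    simpa using h
  · intro σ hσ
    rw [mem_msetU] at hσ ⊢
    refine ⟨fun x => by simp [hσ.1], fun x => ?_⟩
    have := (hσ.2 (π x)).2 (mem_univ _)
    simp only [mem_univ, iff_true]
    intro h
    apply this
    apply π⁻¹.injective
    simpa using h
  · intro σ _; group
  · intro σ _; group
  · intro σ _
    rw [← Equiv.prod_comp π (fun x => w (c x) (c ((π * σ * π⁻¹) x)))]
    simp

def typeU (c : X → C) (u : C) : ℕ := (univ.filter (fun x => c x = u)).card

lemma typeU_le (c : X → C) (u : C) : typeU c u ≤ Fintype.card X := by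
  unfold typeU; rw [← card_univ]; exact card_filter_le _ _

lemma exists_perm_of_type {c c0 : X → C} (h : typeU c = typeU c0) :
    ∃ π : Equiv.Perm X, c = c0 ∘ π := by
  have : ∀ u, Nonempty ({x // c x = u} ≃ {x // c0 x = u}) := by
    intro u
    rw [← Fintype.card_eq, Fintype.card_subtype, Fintype.card_subtype]
    exact congrFun h u
  let f := fun u => (this u).some
  refine ⟨Equiv.ofFiberEquiv f, ?_⟩
  ext x
  exact (Equiv.ofFiberEquiv_map f x).symm

lemma type_comp (c0 : X → C) (π : Equiv.Perm X) : typeU (c0 ∘ π) = typeU c0 := by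
  ext u
  unfold typeU
  refine card_bij (fun x _ => π x) ?_ ?_ ?_
  · intro x hx; simpa using hx
  · intro x _ y _ h; exact π.injective h
  · intro x hx; exact ⟨π⁻¹ x, by simpa using hx, by simp⟩

lemma card_type (c0 : X → C) :
    (Fintype.card X).factorial = 
      (univ.filter (fun c : X → C => typeU c = typeU c0)).card * ∏ u, (typeU c0 u).factorial := by
  have h0 : (univ : Finset (Equiv.Perm X)).card = (Fintype.card X).factorial := by
    rw [card_univ, Fintype.card_perm]
  rw [← h0]
  rw [card_eq_sum_card_fiberwise (f := fun π : Equiv.Perm X => c0 ∘ π) 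
    (t := univ.filter (fun c : X → C => typeU c = typeU c0))]
  · rw [sum_const_nat]
    intro c hc
    obtain ⟨π, rfl⟩ := exists_perm_of_type (mem_filter.1 hc).2
    have := DomMulAct.stabilizer_card c0
    rw [Fintype.card_subtype] at this
    simp only [Fintype.card_subtype] at this
    unfold typeU
    rw [← this]
    refine card_bij (fun ρ _ => ρ * π⁻¹) ?_ ?_ ?_
    · intro ρ hρ
      simp only [mem_filter, mem_univ, true_and] at hρ ⊢
      ext x
      have := congrFun hρ (π⁻¹ x)
      simpa using this
    · intro a _ b _ h; simpa using h
    · intro ρ hρ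
      simp only [mem_filter, mem_univ, true_and] at hρ
      refine ⟨ρ * π, ?_, by group⟩
      simp only [mem_filter, mem_univ, true_and]
      ext x
      have := congrFun hρ (π x)
      simpa using this
  · intro π _
    simp [type_comp]

lemma prod_type {R : Type*} [CommMonoid R] (c : X → C) (r : C → R) : ∏ x, r (c x) = ∏ u, r u ^ typeU c u := by
  rw [← Finset.prod_fiberwise_of_maps_to (s := univ) (t := univ) (g := c) (fun _ _ => mem_univ _)]
  apply prod_congr rfl
  intro u _
  rw [prod_congr rfl (g := fun _ => r u)]
  · rw [prod_const]; rfl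
  · intro x hx; rw [(mem_filter.1 hx).2]


lemma char_orth (m : ℕ) (a b : ℕ) (ha : a ≤ m) (hb : b ≤ m) :
    ∑ k : ZMod (m+1), ZMod.stdAddChar (N := m+1) k ^ a * (ZMod.stdAddChar (N := m+1) (-k)) ^ b =
      if a = b then ((m+1 : ℕ) : ℂ) else 0 := by
  have h1 : ∀ k : ZMod (m+1), ZMod.stdAddChar (N := m+1) k ^ a * (ZMod.stdAddChar (N := m+1) (-k)) ^ b
      = ZMod.stdAddChar (N := m+1) (k * ((a : ZMod (m+1)) - b)) := by
    intro k
    rw [← AddChar.map_nsmul_eq_pow, ← AddChar.map_nsmul_eq_pow, ← AddChar.map_add_eq_mul]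
    congr 1
    simp only [nsmul_eq_mul]; ring
  simp_rw [h1]
  rw [AddChar.sum_mulShift _ (ZMod.isPrimitive_stdAddChar (m+1)), ZMod.card]
  have : ((a : ZMod (m+1)) - b = 0) ↔ a = b := by
    rw [sub_eq_zero, ZMod.natCast_eq_natCast_iff, Nat.ModEq, Nat.mod_eq_of_lt (by omega), Nat.mod_eq_of_lt (by omega)]
  simp only [this]
  split_ifs <;> simp

lemma key_extract (w : C → C → ℂ) (c0 : X → C) (r : C → ℝ) (hr : ∀ u, 0 ≤ r u) (κ : ℝ)
    (hκ : ∀ y : C → ℂ, (∀ u, ‖y u‖ = r u) → ‖∑ u, ∑ u', w u u' * w u' u * y u * y u'‖ ≤ κ) :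
    (univ.filter (fun c : X → C => typeU c = typeU c0)).card * (‖edgeSum w c0‖ * ∏ u, r u ^ typeU c0 u)
      ≤ (msetU (univ : Finset X)).card * κ ^ (Fintype.card X / 2) := by
  set m := Fintype.card X with hm
  set ψ := ZMod.stdAddChar (N := m+1) with hψ
  have hψn : ∀ k, ‖ψ k‖ = 1 := fun k => AddChar.norm_apply ψ k
  have hid : ∑ k : C → ZMod (m+1), (∏ u, ψ (-(k u)) ^ typeU c0 u) * 
      ∑ c : X → C, (∏ x, ((r (c x) : ℂ) * ψ (k (c x)))) * edgeSum w c =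
      ((m+1 : ℕ):ℂ) ^ Fintype.card C * ((univ.filter (fun c : X → C => typeU c = typeU c0)).card * 
        (edgeSum w c0 * ∏ u, (r u : ℂ) ^ typeU c0 u)) := by
    simp_rw [mul_sum]
    rw [sum_comm]
    have : ∀ c : X → C, ∑ k : C → ZMod (m+1), (∏ u, ψ (-(k u)) ^ typeU c0 u) *
        ((∏ x, ((r (c x) : ℂ) * ψ (k (c x)))) * edgeSum w c) =
        if typeU c = typeU c0 then ((m+1 : ℕ):ℂ) ^ Fintype.card C * 
          (edgeSum w c0 * ∏ u, (r u : ℂ) ^ typeU c0 u) else 0 := by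
      intro c
      have h1 : ∀ k : C → ZMod (m+1), (∏ u, ψ (-(k u)) ^ typeU c0 u) *
        ((∏ x, ((r (c x) : ℂ) * ψ (k (c x)))) * edgeSum w c) = 
        (∏ u, (ψ (k u) ^ typeU c u * ψ (-(k u)) ^ typeU c0 u)) * (edgeSum w c * ∏ u, (r u : ℂ) ^ typeU c u) := by
        intro k
        rw [prod_type c (fun u => (r u : ℂ) * ψ (k u))]
        simp_rw [mul_pow]
        rw [prod_mul_distrib, prod_mul_distrib]; ring
      simp_rw [h1]
      rw [← sum_mul]
      have h2 : ∑ k : C → ZMod (m+1), ∏ u, (ψ (k u) ^ typeU c u * ψ (-(k u)) ^ typeU c0 u) =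
          ∏ u, ∑ k : ZMod (m+1), (ψ k ^ typeU c u * ψ (-k) ^ typeU c0 u) := by
        rw [Finset.prod_univ_sum]; simp
      rw [h2]
      have h3 : ∀ u, ∑ k : ZMod (m+1), (ψ k ^ typeU c u * ψ (-k) ^ typeU c0 u) =
        if typeU c u = typeU c0 u then ((m+1 : ℕ) : ℂ) else 0 := fun u =>
        char_orth m _ _ (typeU_le c u) (typeU_le c0 u)
      simp_rw [h3]
      by_cases h : typeU c = typeU c0
      · obtain ⟨π, rfl⟩ := exists_perm_of_type h
        rw [edgeSum_comp, type_comp]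
        simp
      · rw [if_neg h]
        obtain ⟨u, hu⟩ := Function.ne_iff.1 h
        rw [Finset.prod_eq_zero (mem_univ u) (if_neg hu), zero_mul]
    simp_rw [this]
    rw [← sum_filter, sum_const, nsmul_eq_mul]; ring
  have hin : ∀ k : C → ZMod (m+1), ‖∑ c : X → C, (∏ x, ((r (c x) : ℂ) * ψ (k (c x)))) * edgeSum w c‖ ≤ 
      (msetU (univ : Finset X)).card * κ ^ (m / 2) := by
    intro k
    have : ∑ c : X → C, (∏ x, ((r (c x) : ℂ) * ψ (k (c x)))) * edgeSum w c = 
      ∑ σ ∈ msetU (univ : Finset X), (∑ u, ∑ u', w u u' * w u' u * ((r u : ℂ) * ψ (k u)) * ((r u' : ℂ) * ψ (k u'))) ^ (m/2) := by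
      unfold edgeSum
      simp_rw [mul_sum]
      rw [sum_comm]
      apply sum_congr rfl
      intro σ hσ
      rw [← edge_product σ hσ w (fun u => (r u : ℂ) * ψ (k u))]
      apply sum_congr rfl
      intro c _
      rw [← prod_mul_distrib]
    rw [this]
    refine (norm_sum_le _ _).trans ?_
    rw [← nsmul_eq_mul, ← sum_const]
    apply sum_le_sum
    intro σ _
    rw [norm_pow]
    apply pow_le_pow_left₀ (norm_nonneg _)
    apply hκ
    intro u
    rw [norm_mul, hψn, mul_one, Complex.norm_real, Real.norm_of_nonneg (hr u)]
  have hle : ‖((m+1 : ℕ):ℂ) ^ Fintype.card C * ((univ.filter (fun c : X → C => typeU c = typeU c0)).card * 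
        (edgeSum w c0 * ∏ u, (r u : ℂ) ^ typeU c0 u))‖ ≤ 
        ((m+1 : ℕ):ℝ) ^ Fintype.card C * ((msetU (univ : Finset X)).card * κ ^ (m / 2)) := by
    rw [← hid]
    refine (norm_sum_le _ _).trans ?_
    have : ((m+1 : ℕ):ℝ) ^ Fintype.card C * ((msetU (univ : Finset X)).card * κ ^ (m / 2)) = 
        ∑ k : C → ZMod (m+1), ((msetU (univ : Finset X)).card * κ ^ (m / 2)) := by
      rw [sum_const, nsmul_eq_mul, card_univ, Fintype.card_fun, ZMod.card]; push_cast; ring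
    rw [this]
    apply sum_le_sum
    intro k _
    rw [norm_mul, norm_prod]
    simp only [norm_pow, hψn, one_pow, prod_const_one, one_mul]
    exact hin k
  rw [norm_mul, norm_pow, Complex.norm_natCast] at hle
  have hpos : (0:ℝ) < ((m+1 : ℕ):ℝ) ^ Fintype.card C := by positivity
  have := le_of_mul_le_mul_left hle hpos
  rw [norm_mul, norm_mul, Complex.norm_natCast, norm_prod] at this
  simp only [norm_pow, Complex.norm_real] at this
  simpa only [Real.norm_of_nonneg (hr _)] using this

lemma key_bound (w : C → C → ℂ) (c0 : X → C) (r : C → ℝ) (hr : ∀ u, 0 ≤ r u) (κ : ℝ)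
    (hκ : ∀ y : C → ℂ, (∀ u, ‖y u‖ = r u) → ‖∑ u, ∑ u', w u u' * w u' u * y u * y u'‖ ≤ κ) :
    ((Fintype.card X).factorial : ℝ) * (‖edgeSum w c0‖ * ∏ u, r u ^ typeU c0 u)
      ≤ (msetU (univ : Finset X)).card * κ ^ (Fintype.card X / 2) * ∏ u, ((typeU c0 u).factorial : ℝ) := by
  have h := key_extract w c0 r hr κ hκ
  have h2 := card_type c0
  rw [h2]
  push_cast
  have : (0:ℝ) ≤ ∏ u, ((typeU c0 u).factorial : ℝ) := prod_nonneg fun _ _ => Nat.cast_nonneg _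
  nlinarith [mul_le_mul_of_nonneg_right h this]

end EdgeProduct

section Analytic
variable {p : ℕ} [Fact p.Prime]

noncomputable def OmU (u u' : ZMod p × ZMod p) : ℂ := ZMod.stdAddChar (N := p) (u.2 * u'.1 + u'.2 * u.1)

lemma OmU_norm (u u' : ZMod p × ZMod p) : ‖OmU u u'‖ = 1 := AddChar.norm_apply _ _

lemma OmU_orth (u u' : ZMod p × ZMod p) :
    ∑ v, OmU v u * (starRingEnd ℂ) (OmU v u') = if u = u' then ((p:ℂ))^2 else 0 := by
  have h1 : ∀ v : ZMod p × ZMod p, OmU v u * (starRingEnd ℂ) (OmU v u') =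
      ZMod.stdAddChar (N := p) (v.1 * (u.2 - u'.2)) * ZMod.stdAddChar (N := p) (v.2 * (u.1 - u'.1)) := by
    intro v
    unfold OmU
    rw [← AddChar.map_neg_eq_conj, ← AddChar.map_add_eq_mul, ← AddChar.map_add_eq_mul]
    congr 1; ring
  simp_rw [h1]
  rw [Fintype.sum_prod_type]
  simp only
  simp_rw [← mul_sum]
  rw [← sum_mul]
  rw [AddChar.sum_mulShift _ (ZMod.isPrimitive_stdAddChar p), AddChar.sum_mulShift _ (ZMod.isPrimitive_stdAddChar p), ZMod.card]
  simp only [sub_eq_zero, Prod.ext_iff]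
  by_cases h1 : u.1 = u'.1 <;> by_cases h2 : u.2 = u'.2 <;> simp [h1, h2, sq]

lemma OmU_parseval (x : ZMod p × ZMod p → ℂ) :
    ∑ v, ‖∑ u, OmU v u * x u‖^2 = (p:ℝ)^2 * ∑ u, ‖x u‖^2 := by
  have : ((∑ v, ‖∑ u, OmU v u * x u‖^2 : ℝ) : ℂ) = (((p:ℝ)^2 * ∑ u, ‖x u‖^2 : ℝ) : ℂ) := by
    push_cast
    simp_rw [← Complex.mul_conj', map_sum, map_mul, sum_mul_sum]
    rw [sum_comm]
    rw [mul_sum]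
    apply sum_congr rfl
    intro u _
    rw [sum_comm]
    have : ∀ u', ∑ v, OmU v u * x u * ((starRingEnd ℂ) (OmU v u') * (starRingEnd ℂ) (x u')) =
       (if u = u' then ((p:ℂ))^2 else 0) * (x u * (starRingEnd ℂ) (x u')) := by
      intro u'
      rw [← OmU_orth, sum_mul]
      apply sum_congr rfl
      intro v _; ring
    simp_rw [this]
    simp
  exact_mod_cast this

lemma OmU_quad (x : ZMod p × ZMod p → ℂ) :
    ‖∑ u, ∑ u', OmU u u' * x u * x u'‖ ≤ p * ∑ u, ‖x u‖^2 := by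
  have hp : (0:ℝ) < p := by exact_mod_cast (Fact.out : p.Prime).pos
  have h0 : ∑ u, ∑ u', OmU u u' * x u * x u' = ∑ u, x u * ∑ u', OmU u u' * x u' := by
    apply sum_congr rfl
    intro u _
    rw [mul_sum]
    apply sum_congr rfl
    intro u' _; ring
  rw [h0]
  calc _ ≤ ∑ u, ‖x u * ∑ u', OmU u u' * x u'‖ := norm_sum_le _ _
    _ ≤ ∑ u, (p * ‖x u‖^2 / 2 + ‖∑ u', OmU u u' * x u'‖^2 / (2 * p)) := by
        apply sum_le_sum
        intro u _
        rw [norm_mul]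
        set a := ‖x u‖
        set b := ‖∑ u', OmU u u' * x u'‖
        have : p * a^2/2 + b^2/(2*p) - a * b = (p * a - b)^2/(2*p) := by field_simp; ring
        have h2 : 0 ≤ (p * a - b)^2/(2*p) := by positivity
        linarith
    _ = _ := by
        rw [sum_add_distrib, ← sum_div, ← sum_div, OmU_parseval, ← mul_sum]
        field_simp; ring

noncomputable def fInt (a : ZMod p × ZMod p → ℂ) (l : ZMod p × ZMod p → ℝ) (z : ℂ) : ℂ :=
  ∑ u, ∑ u', OmU u u' * a u * a u' * Complex.exp ((1+z)/2 * ((l u : ℂ) + l u') + (z - 1) * (Real.log p : ℂ))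

lemma fInt_diff (a : ZMod p × ZMod p → ℂ) (l : ZMod p × ZMod p → ℝ) : Differentiable ℂ (fInt a l) := by
  unfold fInt
  fun_prop

open Complex.HadamardThreeLines in
lemma fInt_strip (a : ZMod p × ZMod p → ℂ) (l : ZMod p × ZMod p → ℝ) (ha : ∀ u, ‖a u‖ ≤ 1)
    (hl : ∀ u, l u ≤ 0) (hsum : ∑ u, ‖a u‖ ^ 2 * Real.exp (l u) ≤ 1) 
    (hsum' : ∑ u, ‖a u‖ * Real.exp (l u) ≤ 1) (z : ℂ) (hz : z ∈ verticalClosedStrip 0 1) :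
    ‖fInt a l z‖ ≤ 1 := by
  have hp : (0:ℝ) < p := by exact_mod_cast (Fact.out : p.Prime).pos
  have hp1 : (1:ℝ) ≤ p := by exact_mod_cast (Fact.out : p.Prime).one_lt.le
  have hlog : 0 ≤ Real.log p := Real.log_nonneg hp1
  have hre : ∀ z : ℂ, ∀ u u', ((1+z)/2 * ((l u : ℂ) + l u') + (z - 1) * (Real.log p : ℂ)).re = 
     (1 + z.re)/2 * (l u + l u') + (z.re - 1) * Real.log p := by
    intro z u u'
    have : ((1+z)/2 * ((l u : ℂ) + l u') + (z - 1) * (Real.log p : ℂ)) = 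
      ((l u + l u' : ℝ) : ℂ) * ((1 + z) / 2) + (Real.log p : ℂ) * (z - 1) := by push_cast; ring
    rw [this, Complex.add_re, Complex.re_ofReal_mul, Complex.re_ofReal_mul]
    simp
    ring
  have hterm : ∀ z : ℂ, ‖fInt a l z‖ ≤ ∑ u, ∑ u', ‖a u‖ * ‖a u'‖ * Real.exp ((1 + z.re)/2 * (l u + l u') + (z.re - 1) * Real.log p) := by
    intro z
    unfold fInt
    refine (norm_sum_le _ _).trans (sum_le_sum fun u _ => (norm_sum_le _ _).trans (sum_le_sum fun u' _ => ?_))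
    rw [norm_mul, norm_mul, norm_mul, OmU_norm, one_mul, Complex.norm_exp, hre]
  have h0 : ∀ z : ℂ, z.re = 0 → ‖fInt a l z‖ ≤ 1 := by
    intro z hz
    have : fInt a l z = Complex.exp ((z-1) * (Real.log p : ℂ)) * ∑ u, ∑ u', OmU u u' * 
        (a u * Complex.exp ((1+z)/2 * l u)) * (a u' * Complex.exp ((1+z)/2 * l u')) := by
      unfold fInt
      rw [mul_sum]
      apply sum_congr rfl; intro u _
      rw [mul_sum]
      apply sum_congr rfl; intro u' _
      rw [mul_add, Complex.exp_add, Complex.exp_add]; ring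
    rw [this, norm_mul]
    have h1 : ‖Complex.exp ((z-1) * (Real.log p : ℂ))‖ = (p:ℝ)⁻¹ := by
      rw [Complex.norm_exp, mul_comm, Complex.re_ofReal_mul]
      simp [hz, Real.exp_neg, Real.exp_log hp]
    have h2 := OmU_quad (fun u => a u * Complex.exp ((1+z)/2 * l u))
    have h3 : ∀ u, ‖a u * Complex.exp ((1+z)/2 * l u)‖^2 = ‖a u‖^2 * Real.exp (l u) := by
      intro u
      rw [norm_mul, Complex.norm_exp, mul_pow, mul_comm ((1+z)/2), Complex.re_ofReal_mul, ← Real.exp_nat_mul]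
      congr 2
      simp [hz]; ring
    simp_rw [h3] at h2
    rw [h1, inv_mul_le_iff₀ hp, mul_one]
    calc _ ≤ _ := h2
      _ ≤ p * 1 := by gcongr
      _ = p := mul_one _
  have h1 : ∀ z : ℂ, z.re = 1 → ‖fInt a l z‖ ≤ 1 := by
    intro z hz
    refine (hterm z).trans ?_
    rw [hz]
    have : ∀ u u', ‖a u‖ * ‖a u'‖ * Real.exp ((1 + 1)/2 * (l u + l u') + (1 - 1) * Real.log p) = 
       (‖a u‖ * Real.exp (l u)) * (‖a u'‖ * Real.exp (l u')) := by
      intro u u'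
      rw [sub_self, zero_mul, add_zero, one_add_one_eq_two, div_self two_ne_zero, one_mul, Real.exp_add]; ring
    simp_rw [this]
    rw [← sum_mul_sum]
    have hnn : 0 ≤ ∑ u, ‖a u‖ * Real.exp (l u) := sum_nonneg fun u _ => by positivity
    nlinarith
  have hB : BddAbove (Set.image (norm ∘ (fInt a l)) (verticalClosedStrip 0 1)) := by
    refine ⟨∑ u : ZMod p × ZMod p, ∑ u' : ZMod p × ZMod p, 1, ?_⟩
    rintro _ ⟨z, hz, rfl⟩
    refine (hterm z).trans (sum_le_sum fun u _ => sum_le_sum fun u' _ => ?_)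
    have hz' : 0 ≤ z.re ∧ z.re ≤ 1 := hz
    have : Real.exp ((1 + z.re)/2 * (l u + l u') + (z.re - 1) * Real.log p) ≤ 1 := by
      rw [Real.exp_le_one_iff]
      have h1 : (1 + z.re)/2 * (l u + l u') ≤ 0 := mul_nonpos_of_nonneg_of_nonpos (by linarith) (by linarith [hl u, hl u'])
      have h2 : (z.re - 1) * Real.log p ≤ 0 := mul_nonpos_of_nonpos_of_nonneg (by linarith) hlog
      linarith
    calc _ ≤ (1:ℝ) * 1 * 1 := by
          gcongr
          · exact ha u
          · exact ha u'
      _ = 1 := by norm_num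
  have := norm_le_interp_of_mem_verticalClosedStrip₀₁' (fInt a l) hz (fInt_diff a l).diffContOnCl hB (a := 1) (b := 1)
    (fun z hz => h0 z hz) (fun z hz => h1 z hz)
  simpa using this

open Complex.HadamardThreeLines in
lemma fInt_const (a : ZMod p × ZMod p → ℂ) (l : ZMod p × ZMod p → ℝ) (ha : ∀ u, ‖a u‖ ≤ 1)
    (hl : ∀ u, l u ≤ 0) (hsum : ∑ u, ‖a u‖ ^ 2 * Real.exp (l u) ≤ 1) 
    (hsum' : ∑ u, ‖a u‖ * Real.exp (l u) ≤ 1) (s : ℝ) (hs0 : 0 < s) (hs1 : s < 1)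
    (h : 1 ≤ ‖fInt a l s‖) : 1 ≤ ‖fInt a l 1‖ := by
  have hpre : IsPreconnected (verticalStrip 0 1) :=
    ((convex_Ioo (0:ℝ) 1).linear_preimage Complex.reLm).isPreconnected
  have hopen : IsOpen (verticalStrip 0 1) := isOpen_Ioo.preimage Complex.continuous_re
  have hmem : (s : ℂ) ∈ verticalStrip 0 1 := by
    change (s : ℂ).re ∈ Set.Ioo (0:ℝ) 1
    rw [Complex.ofReal_re]; exact ⟨hs0, hs1⟩
  have hmax : IsMaxOn (norm ∘ fInt a l) (verticalStrip 0 1) s := by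
    intro z hz
    have : ‖fInt a l z‖ ≤ 1 := fInt_strip a l ha hl hsum hsum' z (Set.preimage_mono Set.Ioo_subset_Icc_self hz)
    exact this.trans h
  have heq := Complex.eqOn_closure_of_isPreconnected_of_isMaxOn_norm hpre hopen (fInt_diff a l).diffContOnCl hmem hmax
  have h1 : (1:ℂ) ∈ closure (verticalStrip 0 1) := by
    unfold verticalStrip
    rw [Complex.closure_preimage_re, closure_Ioo zero_ne_one]
    simp
  have h2 := heq h1
  rw [h2]
  exact h

lemma phases_eq (ν : ZMod p × ZMod p → ℝ) (hν : ∀ u, 0 ≤ ν u) (hs : ∑ u, ν u = 1)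
    (φ : ZMod p × ZMod p → ℂ) (hφ : ∀ u, ‖φ u‖ = 1)
    (h : 1 ≤ ‖∑ u, ∑ u', OmU u u' * φ u * φ u' * ((ν u * ν u' : ℝ) : ℂ)‖) :
    ∃ ω : ℂ, ω ≠ 0 ∧ ∀ u u', ν u ≠ 0 → ν u' ≠ 0 → OmU u u' * φ u * φ u' = ω := by
  set ω := ∑ u, ∑ u', OmU u u' * φ u * φ u' * ((ν u * ν u' : ℝ) : ℂ) with hω
  have hq : ∑ u, ∑ u', ν u * ν u' = 1 := by rw [← sum_mul_sum, hs, one_mul]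
  have hn : ∀ u u', ‖OmU u u' * φ u * φ u'‖ = 1 := by
    intro u u'; rw [norm_mul, norm_mul, OmU_norm, hφ, hφ]; norm_num
  have hω1 : ‖ω‖ ≤ 1 := by
    rw [hω]
    refine (norm_sum_le _ _).trans ((sum_le_sum fun u _ => (norm_sum_le _ _)).trans ?_)
    rw [← hq]
    refine sum_le_sum fun u _ => sum_le_sum fun u' _ => ?_
    rw [norm_mul, hn, one_mul, Complex.norm_real, Real.norm_of_nonneg (mul_nonneg (hν u) (hν u'))]
  have hω2 : ‖ω‖ = 1 := le_antisymm hω1 h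
  have hre : ∑ u, ∑ u', ν u * ν u' * (1 - ((starRingEnd ℂ) ω * (OmU u u' * φ u * φ u')).re) = 0 := by
    have e1 : (starRingEnd ℂ) ω * ω = 1 := by rw [Complex.conj_mul', hω2]; norm_num
    have e2 : ((starRingEnd ℂ) ω * ω).re = ∑ u, ∑ u', ν u * ν u' * ((starRingEnd ℂ) ω * (OmU u u' * φ u * φ u')).re := by
      conv_lhs => rw [hω, mul_sum, Complex.re_sum, ← hω]
      apply sum_congr rfl; intro u _
      rw [mul_sum, Complex.re_sum]
      apply sum_congr rfl; intro u' _
      rw [← Complex.re_ofReal_mul]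
      congr 1; ring
    rw [e1, Complex.one_re] at e2
    simp_rw [mul_sub, mul_one, sum_sub_distrib]
    rw [hq, ← e2]; norm_num
  have hle : ∀ u u', ((starRingEnd ℂ) ω * (OmU u u' * φ u * φ u')).re ≤ 1 := by
    intro u u'
    refine (Complex.re_le_norm _).trans ?_
    rw [norm_mul, hn, Complex.norm_conj, hω2]; norm_num
  have hnn : ∀ u u', 0 ≤ ν u * ν u' * (1 - ((starRingEnd ℂ) ω * (OmU u u' * φ u * φ u')).re) := fun u u' =>
    mul_nonneg (mul_nonneg (hν u) (hν u')) (by linarith [hle u u'])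
  refine ⟨ω, ?_, ?_⟩
  · intro h0; rw [h0, norm_zero] at hω2; exact zero_ne_one hω2
  · intro u u' hu hu'
    have a1 := (sum_eq_zero_iff_of_nonneg (fun u _ => sum_nonneg fun u' _ => hnn u u')).1 hre u (mem_univ _)
    have a2 := (sum_eq_zero_iff_of_nonneg (fun u' _ => hnn u u')).1 a1 u' (mem_univ _)
    have a3 : ((starRingEnd ℂ) ω * (OmU u u' * φ u * φ u')).re = 1 := by
      rcases mul_eq_zero.1 a2 with h | h
      · exact absurd h (mul_ne_zero hu hu')
      · linarith
    set q := (starRingEnd ℂ) ω * (OmU u u' * φ u * φ u') with hqq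
    have hqn : ‖q‖ = 1 := by rw [hqq, norm_mul, hn, Complex.norm_conj, hω2]; norm_num
    have him : q.im = 0 := by
      have := Complex.sq_norm q
      rw [hqn, Complex.normSq_apply, a3] at this
      nlinarith
    have hq1 : q = 1 := Complex.ext a3 (by simpa using him)
    have e1 : ω * (starRingEnd ℂ) ω = 1 := by rw [Complex.mul_conj', hω2]; norm_num
    calc _ = (ω * (starRingEnd ℂ) ω) * (OmU u u' * φ u * φ u') := by rw [e1, one_mul]
      _ = ω * q := by rw [hqq]; ring
      _ = ω := by rw [hq1, mul_one]

lemma support_line (hp : Odd p) (ν : ZMod p × ZMod p → ℝ) (hs : ∑ u, ν u = 1)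
    (φ : ZMod p × ZMod p → ℂ) (hφ : ∀ u, ‖φ u‖ = 1) (ω : ℂ)
    (h : ∀ u u', ν u ≠ 0 → ν u' ≠ 0 → OmU u u' * φ u * φ u' = ω) :
    (∃ a, ∑ t, ν (a, t) = 1) ∨ (∃ t, ∑ a, ν (a, t) = 1) := by
  have hpp := (Fact.out : p.Prime)
  have hφ0 : ∀ u, φ u ≠ 0 := fun u h0 => by have := hφ u; rw [h0, norm_zero] at this; exact zero_ne_one this
  have h2 : (2 : ZMod p) ≠ 0 := by
    intro h0
    have : ((2:ℕ) : ZMod p) = 0 := by exact_mod_cast h0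
    rw [ZMod.natCast_eq_zero_iff] at this
    have := (Nat.prime_dvd_prime_iff_eq hpp Nat.prime_two).1 this
    subst this
    exact absurd hp (by decide)
  have key : ∀ u u', ν u ≠ 0 → ν u' ≠ 0 → u.1 = u'.1 ∨ u.2 = u'.2 := by
    intro u u' hu hu'
    have e1 := h u u hu hu
    have e2 := h u' u' hu' hu'
    have e3 := h u u' hu hu'
    have e4 : OmU u u' * OmU u u' = OmU u u * OmU u' u' := by
      have : (OmU u u' * OmU u u') * ((φ u)^2 * (φ u')^2) = (OmU u u * OmU u' u') * ((φ u)^2 * (φ u')^2) := by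
        calc _ = (OmU u u' * φ u * φ u') * (OmU u u' * φ u * φ u') := by ring
          _ = (OmU u u * φ u * φ u) * (OmU u' u' * φ u' * φ u') := by rw [e1, e2, e3]
          _ = _ := by ring
      exact mul_right_cancel₀ (mul_ne_zero (pow_ne_zero _ (hφ0 _)) (pow_ne_zero _ (hφ0 _))) this
    unfold OmU at e4
    rw [← AddChar.map_add_eq_mul, ← AddChar.map_add_eq_mul] at e4
    have e5 := ZMod.injective_stdAddChar e4
    have e6 : 2 * ((u.1 - u'.1) * (u.2 - u'.2)) = 0 := by linear_combination -e5
    rcases mul_eq_zero.1 ((mul_eq_zero.1 e6).resolve_left h2) with h | h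
    · left; exact sub_eq_zero.1 h
    · right; exact sub_eq_zero.1 h
  obtain ⟨u0, hu0⟩ : ∃ u, ν u ≠ 0 := by
    by_contra hcon
    push Not at hcon
    simp [hcon] at hs
  by_cases hA : ∀ u, ν u ≠ 0 → u.1 = u0.1
  · left
    refine ⟨u0.1, ?_⟩
    rw [← hs, Fintype.sum_prod_type]
    symm
    rw [Finset.sum_eq_single u0.1]
    · intro b _ hb
      apply sum_eq_zero
      intro t _
      by_contra hne
      exact hb (hA _ hne)
    · simp
  · right
    push Not at hA
    obtain ⟨u1, hu1, hne1⟩ := hA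
    refine ⟨u0.2, ?_⟩
    rw [← hs, Fintype.sum_prod_type_right]
    symm
    rw [Finset.sum_eq_single u0.2]
    · intro b _ hb
      apply sum_eq_zero
      intro t _
      by_contra hne
      have k1 := (key u1 u0 hu1 hu0).resolve_left hne1
      have k2 := (key (t, b) u0 hne hu0).resolve_right hb
      rcases key u1 (t, b) hu1 hne with k | k
      · simp only at k k2; exact hne1 (k.trans k2)
      · simp only at k; exact hb (k.symm.trans k1)
    · simp

lemma analytic_strict (hp : Odd p) (d : ℕ) (hd : 3 ≤ d) (δ : ℝ) (hδ : 0 < δ) (ν : ZMod p × ZMod p → ℝ)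
    (hν : ∀ u, 0 ≤ ν u) (hs : ∑ u, ν u = 1)
    (h1 : ∀ a, ∑ t, ν (a, t) ≤ 1 - δ) (h2 : ∀ t, ∑ a, ν (a, t) ≤ 1 - δ)
    (φ : ZMod p × ZMod p → ℂ) (hφ : ∀ u, ‖φ u‖ = 1) :
    ‖∑ u, ∑ u', OmU u u' * (φ u * ((ν u ^ ((d - 1 : ℝ)/d) : ℝ) : ℂ)) * (φ u' * ((ν u' ^ ((d - 1 : ℝ)/d) : ℝ) : ℂ))‖
      < (p:ℝ) ^ ((2:ℝ)/d) := by
  have hpp : (0:ℝ) < p := by exact_mod_cast (Fact.out : p.Prime).pos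
  have hd0 : (3:ℝ) ≤ d := by exact_mod_cast hd
  by_contra hcon
  push Not at hcon
  have hν1 : ∀ u, ν u ≤ 1 := fun u => by rw [← hs]; exact single_le_sum (fun v _ => hν v) (mem_univ u)
  let a : ZMod p × ZMod p → ℂ := fun u => if ν u = 0 then 0 else φ u
  let l : ZMod p × ZMod p → ℝ := fun u => Real.log (ν u)
  have ha : ∀ u, ‖a u‖ ≤ 1 := by
    intro u; simp only [a]; split_ifs
    · simp
    · exact (hφ u).le
  have hl : ∀ u, l u ≤ 0 := fun u => Real.log_nonpos (hν u) (hν1 u)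
  have hal : ∀ u, ‖a u‖ * Real.exp (l u) = ν u := by
    intro u; simp only [a, l]
    by_cases h : ν u = 0
    · simp [h]
    · rw [if_neg h, hφ, one_mul, Real.exp_log (lt_of_le_of_ne (hν u) (Ne.symm h))]
  have hal2 : ∀ u, ‖a u‖^2 * Real.exp (l u) = ν u := by
    intro u; simp only [a, l]
    by_cases h : ν u = 0
    · simp [h]
    · rw [if_neg h, hφ, one_pow, one_mul, Real.exp_log (lt_of_le_of_ne (hν u) (Ne.symm h))]
  set s : ℝ := 1 - 2 / d with hsdef
  have hs0 : 0 < s := by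
    rw [hsdef, sub_pos, div_lt_one (by linarith)]; linarith
  have hs1 : s < 1 := by
    rw [hsdef]; have : 0 < 2 / (d:ℝ) := by positivity
    linarith
  have hhalf : (1 + s)/2 = (d - 1 : ℝ)/d := by rw [hsdef]; field_simp; ring
  have hα0 : (d - 1 : ℝ)/d ≠ 0 := by
    have : 0 < (d - 1 : ℝ)/d := div_pos (by linarith) (by linarith)
    exact this.ne'
  have haexp : ∀ u, a u * Complex.exp ((((1+s)/2 * l u : ℝ)) : ℂ) = φ u * ((ν u ^ ((d - 1 : ℝ)/d) : ℝ) : ℂ) := by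
    intro u; simp only [a, l]
    by_cases h : ν u = 0
    · rw [if_pos h, h, Real.zero_rpow hα0]; simp
    · rw [if_neg h, hhalf, Real.rpow_def_of_pos (lt_of_le_of_ne (hν u) (Ne.symm h)), Complex.ofReal_exp, mul_comm (Real.log _)]
  have hfs : fInt a l s = (((p:ℝ) ^ (-(2:ℝ)/d) : ℝ) : ℂ) * ∑ u, ∑ u', OmU u u' * (φ u * ((ν u ^ ((d - 1 : ℝ)/d) : ℝ) : ℂ)) * (φ u' * ((ν u' ^ ((d - 1 : ℝ)/d) : ℝ) : ℂ)) := by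
    unfold fInt
    simp_rw [← haexp]
    rw [mul_sum]
    apply sum_congr rfl; intro u _
    rw [mul_sum]
    apply sum_congr rfl; intro u' _
    have e1 : ((s:ℂ) - 1) * (Real.log p : ℂ) = ((Real.log p * (-2/d) : ℝ) : ℂ) := by
      rw [hsdef]; push_cast; ring
    have e2 : (1 + (s:ℂ))/2 * ((l u : ℂ) + l u') = (((1+s)/2 * l u : ℝ) : ℂ) + (((1+s)/2 * l u' : ℝ) : ℂ) := by
      push_cast; ring
    rw [e1, e2, Complex.exp_add, Complex.exp_add, Real.rpow_def_of_pos hpp, ← Complex.ofReal_exp (Real.log p * (-2/d))]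
    ring
  have hge : 1 ≤ ‖fInt a l s‖ := by
    rw [hfs, norm_mul, Complex.norm_real, Real.norm_of_nonneg (by positivity)]
    have : (1:ℝ) = (p:ℝ) ^ (-(2:ℝ)/d) * (p:ℝ) ^ ((2:ℝ)/d) := by
      rw [← Real.rpow_add hpp, neg_div, neg_add_cancel, Real.rpow_zero]
    refine this.le.trans ?_
    exact mul_le_mul_of_nonneg_left hcon (by positivity)
  have hone := fInt_const a l ha hl (by simp_rw [hal2]; exact hs.le) (by simp_rw [hal]; exact hs.le) s hs0 hs1 hge
  have hf1 : fInt a l 1 = ∑ u, ∑ u', OmU u u' * φ u * φ u' * ((ν u * ν u' : ℝ) : ℂ) := by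
    have e : ∀ u, a u * Complex.exp (l u) = φ u * ν u := by
      intro u; simp only [a, l]
      by_cases h : ν u = 0
      · simp [h]
      · rw [if_neg h, ← Complex.ofReal_exp, Real.exp_log (lt_of_le_of_ne (hν u) (Ne.symm h))]
    unfold fInt
    apply sum_congr rfl; intro u _
    apply sum_congr rfl; intro u' _
    rw [sub_self, zero_mul, add_zero, one_add_one_eq_two, div_self two_ne_zero, one_mul, Complex.exp_add]
    calc _ = OmU u u' * (a u * Complex.exp (l u)) * (a u' * Complex.exp (l u')) := by ring
      _ = _ := by rw [e, e]; push_cast; ring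
  rw [hf1] at hone
  obtain ⟨ω, _, hω⟩ := phases_eq ν hν hs φ hφ hone
  rcases support_line hp ν hs φ hφ ω hω with ⟨a, h⟩ | ⟨t, h⟩
  · linarith [h1 a]
  · linarith [h2 t]

lemma analytic_unif (hp : Odd p) (d : ℕ) (hd : 3 ≤ d) (δ : ℝ) (hδ : 0 < δ) :
    ∃ ρ : ℝ, 0 ≤ ρ ∧ ρ < (p:ℝ) ^ ((2:ℝ)/d) ∧ ∀ ν : ZMod p × ZMod p → ℝ, (∀ u, 0 ≤ ν u) → ∑ u, ν u = 1 →
    (∀ a, ∑ t, ν (a, t) ≤ 1 - δ) → (∀ t, ∑ a, ν (a, t) ≤ 1 - δ) →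
    ∀ y : ZMod p × ZMod p → ℂ, (∀ u, ‖y u‖ = ν u ^ ((d - 1 : ℝ)/d)) →
      ‖∑ u, ∑ u', OmU u u' * y u * y u'‖ ≤ ρ := by
  have hpp : (0:ℝ) < p := by exact_mod_cast (Fact.out : p.Prime).pos
  have hd0 : (3:ℝ) ≤ d := by exact_mod_cast hd
  have hα0 : 0 ≤ (d - 1 : ℝ)/d := div_nonneg (by linarith) (by linarith)
  let S1 : Set (ZMod p × ZMod p → ℝ) := {ν | (∀ u, 0 ≤ ν u) ∧ ∑ u, ν u = 1 ∧
    (∀ a, ∑ t, ν (a, t) ≤ 1 - δ) ∧ (∀ t, ∑ a, ν (a, t) ≤ 1 - δ)}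
  let S2 : Set (ZMod p × ZMod p → ℂ) := Set.pi Set.univ (fun _ => Metric.sphere 0 1)
  have hS2 : IsCompact S2 := isCompact_univ_pi (fun _ => isCompact_sphere 0 1)
  have hS1 : IsCompact S1 := by
    apply IsCompact.of_isClosed_subset (isCompact_univ_pi (fun _ : ZMod p × ZMod p => isCompact_Icc (a := (0:ℝ)) (b := 1)))
    · have e : S1 = (⋂ u, {ν | 0 ≤ ν u}) ∩ ({ν | ∑ u, ν u = 1} ∩ ((⋂ a, {ν | ∑ t, ν (a, t) ≤ 1 - δ}) ∩ 
          (⋂ t, {ν | ∑ a, ν (a, t) ≤ 1 - δ}))) := by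
        ext ν; simp [S1]
      rw [e]
      refine IsClosed.inter (isClosed_iInter fun u => isClosed_le (by fun_prop) (by fun_prop)) 
        (IsClosed.inter (isClosed_eq (by fun_prop) (by fun_prop)) (IsClosed.inter 
          (isClosed_iInter fun u => isClosed_le (by fun_prop) (by fun_prop)) 
          (isClosed_iInter fun u => isClosed_le (by fun_prop) (by fun_prop))))
    · rintro ν ⟨h0, hs, _⟩ u _
      refine ⟨h0 u, ?_⟩
      rw [← hs]; exact single_le_sum (fun v _ => h0 v) (mem_univ u)
  let G : (ZMod p × ZMod p → ℝ) × (ZMod p × ZMod p → ℂ) → ℝ := fun q =>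
    ‖∑ u, ∑ u', OmU u u' * (q.2 u * ((q.1 u ^ ((d - 1 : ℝ)/d) : ℝ) : ℂ)) * (q.2 u' * ((q.1 u' ^ ((d - 1 : ℝ)/d) : ℝ) : ℂ))‖
  have hG : Continuous G := by
    have hc : ∀ u, Continuous (fun q : (ZMod p × ZMod p → ℝ) × (ZMod p × ZMod p → ℂ) => q.1 u ^ ((d - 1 : ℝ)/d)) := by
      intro u
      apply Continuous.rpow_const (by fun_prop)
      intro q; right; exact hα0
    have hc' : ∀ u, Continuous (fun q : (ZMod p × ZMod p → ℝ) × (ZMod p × ZMod p → ℂ) => ((q.1 u ^ ((d - 1 : ℝ)/d) : ℝ) : ℂ)) := 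
      fun u => Complex.continuous_ofReal.comp (hc u)
    apply Continuous.norm
    refine continuous_finsetSum _ fun u _ => continuous_finsetSum _ fun u' _ => ?_
    have := hc' u
    have := hc' u'
    fun_prop
  have hK := hS1.prod hS2
  have hred : ∀ ρ : ℝ, (∀ q ∈ S1 ×ˢ S2, G q ≤ ρ) → ∀ ν : ZMod p × ZMod p → ℝ, (∀ u, 0 ≤ ν u) → ∑ u, ν u = 1 →
    (∀ a, ∑ t, ν (a, t) ≤ 1 - δ) → (∀ t, ∑ a, ν (a, t) ≤ 1 - δ) →
    ∀ y : ZMod p × ZMod p → ℂ, (∀ u, ‖y u‖ = ν u ^ ((d - 1 : ℝ)/d)) →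
      ‖∑ u, ∑ u', OmU u u' * y u * y u'‖ ≤ ρ := by
    intro ρ hρ ν h0 hs h1 h2 y hy
    let φ : ZMod p × ZMod p → ℂ := fun u => if y u = 0 then 1 else y u / ‖y u‖
    have hφ : ∀ u, ‖φ u‖ = 1 := by
      intro u; simp only [φ]; split_ifs with h
      · simp
      · rw [norm_div, Complex.norm_real, norm_norm, div_self (norm_ne_zero_iff.2 h)]
    have hφy : ∀ u, φ u * ((ν u ^ ((d - 1 : ℝ)/d) : ℝ) : ℂ) = y u := by
      intro u
      rw [← hy]
      simp only [φ]; split_ifs with h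
      · rw [h]; simp
      · rw [div_mul_cancel₀]; exact_mod_cast norm_ne_zero_iff.2 h
    have := hρ (ν, φ) ⟨⟨h0, hs, h1, h2⟩, fun u _ => by simp [hφ]⟩
    simp only [G, hφy] at this
    exact this
  rcases (S1 ×ˢ S2).eq_empty_or_nonempty with he | hne
  · refine ⟨0, le_rfl, by positivity, hred 0 ?_⟩
    intro q hq; rw [he] at hq; exact absurd hq (Set.notMem_empty _)
  · obtain ⟨q, hq, hmax⟩ := hK.exists_isMaxOn hne hG.continuousOn
    refine ⟨G q, norm_nonneg _, ?_, hred _ fun q' hq' => hmax hq'⟩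
    obtain ⟨⟨h0, hs, h1, h2⟩, hφ⟩ := hq
    exact analytic_strict hp d hd δ hδ q.1 h0 hs h1 h2 q.2 (fun u => by simpa using hφ u (Set.mem_univ u))

end Analytic

section FarFar

lemma fact_upper (N : ℕ) : (N.factorial : ℝ) ≤ Real.exp 1 * (N + 1) * ((N:ℝ) ^ N * Real.exp (-N)) := by
  have main : ∀ k : ℕ, ((k+1).factorial : ℝ) ≤ Real.exp 1 * (k + 1) * (((k+1 : ℕ):ℝ) ^ (k+1) * Real.exp (-(k+1 : ℕ))) := by
    intro k
    induction k with
    | zero => simp [← Real.exp_add]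
    | succ k ih =>
      rw [Nat.factorial_succ]
      push_cast at ih ⊢
      have key : ((k:ℝ)+1)^(k+2) * Real.exp 1 ≤ ((k:ℝ)+1+1)^(k+2) := by
        have hl : 1 - (((k:ℝ)+2)/(k+1))⁻¹ ≤ Real.log (((k:ℝ)+2)/(k+1)) := Real.one_sub_inv_le_log_of_pos (by positivity)
        have e1 : 1 - (((k:ℝ)+2)/(k+1))⁻¹ = 1 / (k+2) := by field_simp; ring
        rw [e1] at hl
        have h2 : Real.exp 1 ≤ (((k:ℝ)+2)/(k+1))^(k+2) := by
          rw [← Real.exp_log (show 0 < (((k:ℝ)+2)/(k+1)) by positivity), ← Real.exp_nat_mul, Real.exp_le_exp]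
          push_cast
          calc (1:ℝ) = (k+2) * (1/(k+2)) := by field_simp
            _ ≤ _ := by gcongr
        rw [div_pow, le_div_iff₀ (by positivity)] at h2
        have : (k:ℝ)+1+1 = k+2 := by ring
        rw [this, mul_comm]; exact h2
      have e2 : Real.exp (-((k:ℝ)+1)) = Real.exp 1 * Real.exp (-((k:ℝ)+1+1)) := by
        rw [← Real.exp_add]; congr 1; ring
      calc ((k:ℝ)+1+1) * ((k+1).factorial : ℝ) ≤ ((k:ℝ)+1+1) * (Real.exp 1 * (k + 1) * (((k:ℝ)+1) ^ (k+1) * Real.exp (-((k:ℝ)+1)))) := by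
            gcongr
        _ = Real.exp 1 * (k+1+1) * ((((k:ℝ)+1)^(k+2) * Real.exp 1) * Real.exp (-((k:ℝ)+1+1))) := by
            rw [e2]; ring
        _ ≤ Real.exp 1 * (k+1+1) * (((k:ℝ)+1+1)^(k+2) * Real.exp (-((k:ℝ)+1+1))) := by gcongr
        _ = _ := by ring
  rcases N with _ | k
  · simp
  · refine (main k).trans ?_
    push_cast
    gcongr
    linarith

lemma fact_lower (m : ℕ) : (m:ℝ)^m * Real.exp (-m) ≤ m.factorial := by
  have := Real.pow_div_factorial_le_exp (m:ℝ) (Nat.cast_nonneg m) m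
  rw [div_le_iff₀ (by positivity)] at this
  rw [Real.exp_neg, ← div_eq_mul_inv, div_le_iff₀ (Real.exp_pos _)]
  linarith

variable {C : Type} [Fintype C] [DecidableEq C]

lemma sum_typeU {X : Type} [Fintype X] (c : X → C) : ∑ b, typeU c b = Fintype.card X := by
  unfold typeU
  rw [← card_univ, ← card_eq_sum_card_fiberwise (fun _ _ => mem_univ _)]

lemma fact_prod {X : Type} [Fintype X] [DecidableEq X] (c : X → C) (hX : 0 < Fintype.card X) :
    ∏ b, ((typeU c b).factorial : ℝ) ≤ (Real.exp 1 * (Fintype.card X + 1)) ^ Fintype.card C *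
      (∏ b, ((typeU c b : ℝ) / Fintype.card X) ^ typeU c b) * (Fintype.card X).factorial := by
  set m := Fintype.card X with hm
  have hm0 : (0:ℝ) < m := by exact_mod_cast hX
  have h1 : ∏ b, ((typeU c b).factorial : ℝ) ≤ ∏ b, ((Real.exp 1 * (m + 1)) * ((((typeU c b : ℝ) / m) ^ typeU c b) * ((m:ℝ) ^ typeU c b * Real.exp (-(typeU c b : ℝ))))) := by
    apply prod_le_prod
    · intro b _; positivity
    · intro b _
      refine (fact_upper _).trans ?_
      have e : ((((typeU c b : ℝ) / m) ^ typeU c b) * ((m:ℝ) ^ typeU c b * Real.exp (-(typeU c b : ℝ)))) = 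
        (typeU c b : ℝ) ^ typeU c b * Real.exp (-(typeU c b : ℝ)) := by
        rw [← mul_assoc, ← mul_pow, div_mul_cancel₀ _ hm0.ne']
      rw [e]
      have : (typeU c b : ℝ) ≤ m := by exact_mod_cast typeU_le c b
      gcongr
  refine h1.trans ?_
  rw [prod_mul_distrib, prod_const, card_univ, prod_mul_distrib, prod_mul_distrib, prod_pow_eq_pow_sum, sum_typeU, ← Real.exp_sum,
    sum_neg_distrib, ← Nat.cast_sum, sum_typeU, mul_assoc]
  have := fact_lower m
  gcongr

lemma sum_type_prod (n : ℕ) (hn : 0 < n) :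
    ∑ u : Fin n → C, ∏ b, ((typeU u b : ℝ) / n) ^ typeU u b ≤ ((n:ℝ) + 1) ^ Fintype.card C := by
  rw [← sum_fiberwise_of_maps_to (s := univ) (t := univ.image (fun u : Fin n → C => typeU u)) (g := fun u => typeU u)
    (fun u _ => mem_image_of_mem _ (mem_univ u))]
  have hn0 : (0:ℝ) < n := by exact_mod_cast hn
  have h1 : ∀ τ ∈ univ.image (fun u : Fin n → C => typeU u), 
      ∑ u : Fin n → C with typeU u = τ, ∏ b, ((typeU u b : ℝ) / n) ^ typeU u b ≤ 1 := by
    intro τ hτ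
    obtain ⟨u0, _, rfl⟩ := mem_image.1 hτ
    calc _ = ∑ u : Fin n → C with typeU u = typeU u0, ∏ k, ((typeU u0 (u k) : ℝ) / n) := by
          apply sum_congr rfl
          intro u hu
          rw [(mem_filter.1 hu).2, ← (mem_filter.1 hu).2, ← prod_type u (fun b => (typeU u b : ℝ)/n)]
      _ ≤ ∑ u : Fin n → C, ∏ k, ((typeU u0 (u k) : ℝ) / n) := by
          apply sum_le_sum_of_subset_of_nonneg (filter_subset _ _)
          intro u _ _
          exact prod_nonneg fun k _ => by positivity
      _ = ∏ k : Fin n, ∑ b, ((typeU u0 b : ℝ) / n) := by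
          rw [Finset.prod_univ_sum]; simp
      _ = 1 := by
          rw [← sum_div, ← Nat.cast_sum, sum_typeU, Fintype.card_fin, div_self hn0.ne', prod_const_one]
  refine (sum_le_sum h1).trans ?_
  rw [sum_const, nsmul_eq_mul, mul_one]
  have h2 : (univ.image (fun u : Fin n → C => typeU u)) ⊆ Fintype.piFinset (fun _ : C => range (n+1)) := by
    intro τ hτ
    obtain ⟨u0, _, rfl⟩ := mem_image.1 hτ
    rw [Fintype.mem_piFinset]
    intro b
    rw [mem_range]
    have := typeU_le u0 b
    rw [Fintype.card_fin] at this
    omega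
  have h3 := card_le_card h2
  rw [Fintype.card_piFinset, prod_const, card_range, card_univ] at h3
  exact_mod_cast h3

lemma type_fst {n d : ℕ} (u : Fin n → C) (b : C) :
    typeU (fun x : Fin n × Fin d => u x.1) b = d * typeU u b := by
  unfold typeU
  have : (univ.filter (fun x : Fin n × Fin d => u x.1 = b)) = (univ.filter (fun k => u k = b)) ×ˢ univ := by
    ext ⟨a, i⟩; simp
  rw [this, card_product, card_univ, Fintype.card_fin, mul_comm]

variable {p : ℕ} [Fact p.Prime]

noncomputable def wU (u u' : ZMod p × ZMod p) : ℂ := ZMod.stdAddChar (N := p) (u.2 * u'.1)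

lemma wU_mul (u u' : ZMod p × ZMod p) : wU u u' * wU u' u = OmU u u' := by
  unfold wU OmU; rw [← AddChar.map_add_eq_mul]

lemma far_term {n d : ℕ} (hd : 3 ≤ d) (hn : 0 < n) (δ ρ : ℝ)
    (hρ : ∀ ν : ZMod p × ZMod p → ℝ, (∀ u, 0 ≤ ν u) → ∑ u, ν u = 1 →
    (∀ a, ∑ t, ν (a, t) ≤ 1 - δ) → (∀ t, ∑ a, ν (a, t) ≤ 1 - δ) →
    ∀ y : ZMod p × ZMod p → ℂ, (∀ u, ‖y u‖ = ν u ^ ((d - 1 : ℝ)/d)) →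
      ‖∑ u, ∑ u', OmU u u' * y u * y u'‖ ≤ ρ)
    (hρ0 : 0 ≤ ρ)
    (u : Fin n → ZMod p × ZMod p)
    (h1 : ∀ a, δ * n ≤ ((univ.filter (fun k => (u k).1 ≠ a)).card : ℝ))
    (h2 : ∀ a, δ * n ≤ ((univ.filter (fun k => (u k).2 ≠ a)).card : ℝ)) :
    ‖edgeSum wU (fun x : Fin n × Fin d => u x.1)‖ ≤ 
      (msetU (univ : Finset (Fin n × Fin d))).card * ρ ^ (n * d / 2) * 
       ((Real.exp 1 * ((n * d : ℕ) + 1)) ^ (p^2)) * ∏ b, ((typeU u b : ℝ) / n) ^ typeU u b := by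
  have hn0 : (0:ℝ) < n := by exact_mod_cast hn
  have hd0 : (3:ℝ) ≤ d := by exact_mod_cast hd
  have hdp : (0:ℝ) < d := by linarith
  set ν : ZMod p × ZMod p → ℝ := fun b => (typeU u b : ℝ) / n with hν
  have hν0 : ∀ b, 0 ≤ ν b := fun b => by positivity
  have hνs : ∑ b, ν b = 1 := by
    rw [hν, ← sum_div, ← Nat.cast_sum, sum_typeU, Fintype.card_fin, div_self hn0.ne']
  have hm1 : ∀ a, ∑ t, ν (a, t) ≤ 1 - δ := by
    intro a
    have e : ∑ t, typeU u (a, t) = (univ.filter (fun k => (u k).1 = a)).card := by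
      rw [card_eq_sum_card_fiberwise (f := fun k => (u k).2) (t := univ) (fun _ _ => mem_univ _)]
      apply sum_congr rfl; intro t _
      unfold typeU
      rw [filter_filter]
      congr 1; ext k; simp [Prod.ext_iff]
    have e2 := card_filter_add_card_filter_not (s := (univ : Finset (Fin n))) (fun k => (u k).1 = a)
    rw [card_univ, Fintype.card_fin] at e2
    have e3 : ((univ.filter (fun k => (u k).1 = a)).card : ℝ) + ((univ.filter (fun k => (u k).1 ≠ a)).card : ℝ) = n := by
      exact_mod_cast e2
    rw [hν, ← sum_div, ← Nat.cast_sum, e, div_le_iff₀ hn0]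
    linarith [h1 a]
  have hm2 : ∀ t, ∑ a, ν (a, t) ≤ 1 - δ := by
    intro a
    have e : ∑ t, typeU u (t, a) = (univ.filter (fun k => (u k).2 = a)).card := by
      rw [card_eq_sum_card_fiberwise (f := fun k => (u k).1) (t := univ) (fun _ _ => mem_univ _)]
      apply sum_congr rfl; intro t _
      unfold typeU
      rw [filter_filter]
      congr 1; ext k; simp [Prod.ext_iff, and_comm]
    have e2 := card_filter_add_card_filter_not (s := (univ : Finset (Fin n))) (fun k => (u k).2 = a)
    rw [card_univ, Fintype.card_fin] at e2
    have e3 : ((univ.filter (fun k => (u k).2 = a)).card : ℝ) + ((univ.filter (fun k => (u k).2 ≠ a)).card : ℝ) = n := by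
      exact_mod_cast e2
    rw [hν, ← sum_div, ← Nat.cast_sum, e, div_le_iff₀ hn0]
    linarith [h2 a]
  set c : Fin n × Fin d → ZMod p × ZMod p := fun x => u x.1 with hc
  have hkb := key_bound (wU (p := p)) c (fun b => ν b ^ ((d - 1 : ℝ)/d)) (fun b => Real.rpow_nonneg (hν0 b) _) ρ
    (by
      intro y hy
      simp_rw [wU_mul]
      exact hρ ν hν0 hνs hm1 hm2 y hy)
  have hcard : Fintype.card (Fin n × Fin d) = n * d := by simp
  have hfp := fact_prod c (by rw [hcard]; exact Nat.mul_pos hn (by omega))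
  rw [hcard] at hkb hfp
  have hC : Fintype.card (ZMod p × ZMod p) = p^2 := by
    rw [Fintype.card_prod, ZMod.card]; ring
  rw [hC] at hfp
  have hr : ∏ b, (ν b ^ ((d - 1 : ℝ)/d)) ^ typeU c b = ∏ b, ν b ^ ((d-1) * typeU u b) := by
    apply prod_congr rfl; intro b _
    rw [hc, type_fst, ← Real.rpow_natCast, ← Real.rpow_mul (hν0 b), ← Real.rpow_natCast]
    congr 1
    rw [Nat.cast_mul, Nat.cast_mul, Nat.cast_sub (by omega)]
    push_cast; field_simp
  have hq : ∏ b, ((typeU c b : ℝ) / (n * d : ℕ)) ^ typeU c b = 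
      (∏ b, ν b ^ ((d-1) * typeU u b)) * ∏ b, ν b ^ typeU u b := by
    rw [← prod_mul_distrib]
    apply prod_congr rfl; intro b _
    rw [← pow_add, hc, type_fst]
    have : (d-1) * typeU u b + typeU u b = d * typeU u b := by
      obtain ⟨e, rfl⟩ : ∃ e, d = e + 1 := ⟨d - 1, by omega⟩
      simp; ring
    rw [this, hν]
    congr 1
    push_cast; field_simp
  rw [hr] at hkb
  rw [hq] at hfp
  set A := ∏ b, ν b ^ ((d-1) * typeU u b) with hA
  have hA0 : 0 < A := by
    apply prod_pos; intro b _
    by_cases h : typeU u b = 0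
    · rw [h]; simp
    · have : 0 < ν b := by
        rw [hν]
        have : 0 < typeU u b := Nat.pos_of_ne_zero h
        positivity
      positivity
  have hf0 : (0:ℝ) < ((n*d).factorial : ℝ) := by positivity
  have : (((n*d).factorial : ℝ) * A) * ‖edgeSum wU c‖ ≤ (((n*d).factorial : ℝ) * A) *
      ((msetU (univ : Finset (Fin n × Fin d))).card * ρ ^ (n * d / 2) * 
       ((Real.exp 1 * ((n * d : ℕ) + 1)) ^ (p^2)) * ∏ b, ν b ^ typeU u b) := by
    calc _ = ((n*d).factorial : ℝ) * (‖edgeSum wU c‖ * A) := by ring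
      _ ≤ _ := hkb
      _ ≤ (msetU (univ : Finset (Fin n × Fin d))).card * ρ ^ (n * d / 2) * _ := 
          mul_le_mul_of_nonneg_left hfp (by positivity)
      _ = _ := by ring
  exact le_of_mul_le_mul_left this (mul_pos hf0 hA0)

end FarFar

section Final
variable {p : ℕ} [Fact p.Prime] {n d : ℕ}

lemma near_count (K δ : ℝ) (hd : 3 ≤ d) (hK : K = 162 * d * p) (hδ : δ = 1 / (8 * d * K^2)) :
    (((univ : Finset (Fin n → ZMod p)).filter (fun v => ∃ a, ((univ.filter (fun k => v k ≠ a)).card : ℝ) ≤ δ * n)).card : ℝ)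
      ≤ p * (121/100 : ℝ) ^ n := by
  have hp0 : (1:ℝ) ≤ p := by exact_mod_cast (Fact.out : p.Prime).one_lt.le
  have hpp : (0:ℝ) < p := by linarith
  have hd0 : (3:ℝ) ≤ d := by exact_mod_cast hd
  set x : ℝ := 1 / (10 * p) with hx
  have hx0 : 0 < x := by positivity
  have hx1 : x ≤ 1 := by rw [hx, div_le_one (by positivity)]; linarith
  have hδ0 : 0 ≤ δ := by rw [hδ]; positivity
  have hK1 : 162 * p ≤ K := by rw [hK]; nlinarith
  have hδp : δ * (10 * p) ≤ 1/100 := by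
    rw [hδ, one_div_mul_eq_div, div_le_iff₀ (by rw [hK]; positivity)]
    have : (162 * p:ℝ)^2 ≤ K^2 := by gcongr
    nlinarith
  have hxδ : x ^ (-δ) ≤ 11/10 := by
    have : x ^ (-δ) = (10 * p : ℝ) ^ δ := by
      rw [hx, one_div, Real.inv_rpow (by positivity), Real.rpow_neg (by positivity), inv_inv]
    rw [this, Real.rpow_def_of_pos (by positivity)]
    have h1 : Real.log (10 * p) * δ ≤ 1/100 := by
      have : Real.log (10 * p) ≤ 10 * p := Real.log_le_self (by positivity)
      nlinarith
    have h2 := Real.add_one_le_exp (-(1/100 : ℝ))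
    have h3 : Real.exp (1/100) * Real.exp (-(1/100 : ℝ)) = 1 := by rw [← Real.exp_add]; simp
    have h4 : Real.exp (1/100) ≤ 11/10 := by nlinarith [Real.exp_pos (1/100 : ℝ)]
    exact (Real.exp_le_exp.2 h1).trans h4
  have hone : ∀ a : ZMod p, (((univ : Finset (Fin n → ZMod p)).filter (fun v => ((univ.filter (fun k => v k ≠ a)).card : ℝ) ≤ δ * n)).card : ℝ)
      ≤ (121/100 : ℝ) ^ n := by
    intro a
    have hprod : ∀ v : Fin n → ZMod p, ∏ k, (if v k ≠ a then x else 1) = x ^ (univ.filter (fun k => v k ≠ a)).card := by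
      intro v; rw [prod_ite]; simp
    have hsum : ∑ v : Fin n → ZMod p, ∏ k, (if v k ≠ a then x else 1) ≤ (11/10 : ℝ)^n := by
      have e : ∑ v : Fin n → ZMod p, ∏ k, (if v k ≠ a then x else 1) = ∏ k : Fin n, ∑ b : ZMod p, (if b ≠ a then x else 1) := by
        rw [Finset.prod_univ_sum]; simp
      rw [e, prod_const, card_univ, Fintype.card_fin]
      apply pow_le_pow_left₀ (sum_nonneg fun b _ => by split_ifs <;> positivity)
      have e2 : ∀ b : ZMod p, (if b ≠ a then x else 1) = x + (if b = a then 1 - x else 0) := by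
        intro b; by_cases h : b = a <;> simp [h]
      simp_rw [e2]
      rw [sum_add_distrib, sum_const, card_univ, ZMod.card, nsmul_eq_mul, sum_ite_eq' univ a, if_pos (mem_univ a)]
      have : (p:ℝ) * x = 1/10 := by rw [hx]; field_simp
      linarith
    have hc : (((univ : Finset (Fin n → ZMod p)).filter (fun v => ((univ.filter (fun k => v k ≠ a)).card : ℝ) ≤ δ * n)).card : ℝ) ≤
        x ^ (-(δ * n)) * ∑ v : Fin n → ZMod p, ∏ k, (if v k ≠ a then x else 1) := by
      rw [mul_sum, card_eq_sum_ones, Nat.cast_sum]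
      refine le_trans (sum_le_sum (g := fun v => x ^ (-(δ * n)) * ∏ k, (if v k ≠ a then x else 1)) ?_)
        (sum_le_sum_of_subset_of_nonneg (filter_subset _ _) ?_)
      · intro v hv
        rw [hprod, ← Real.rpow_natCast, ← Real.rpow_add hx0]
        rw [Nat.cast_one]
        apply Real.one_le_rpow_of_pos_of_le_one_of_nonpos hx0 hx1
        linarith [(mem_filter.1 hv).2]
      · intro v _ _
        rw [hprod]; positivity
    calc _ ≤ _ := hc
      _ ≤ (11/10 : ℝ)^n * (11/10 : ℝ)^n := by
          apply mul_le_mul _ hsum _ (by positivity)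
          · rw [← neg_mul, Real.rpow_mul hx0.le, Real.rpow_natCast]
            exact pow_le_pow_left₀ (by positivity) hxδ n
          · apply sum_nonneg; intro v _; rw [hprod]; positivity
      _ = _ := by rw [← mul_pow]; norm_num
  calc _ ≤ (((univ : Finset (ZMod p)).biUnion (fun a => (univ : Finset (Fin n → ZMod p)).filter (fun v => ((univ.filter (fun k => v k ≠ a)).card : ℝ) ≤ δ * n))).card : ℝ) := by
        apply Nat.cast_le.2
        apply card_le_card
        intro v hv
        simpa using hv
    _ ≤ ∑ a : ZMod p, (121/100 : ℝ) ^ n := by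
        refine le_trans (Nat.cast_le.2 card_biUnion_le) ?_
        rw [Nat.cast_sum]
        exact sum_le_sum fun a _ => hone a
    _ = _ := by rw [sum_const, card_univ, ZMod.card, nsmul_eq_mul]

noncomputable def SU (d : ℕ) (v t : Fin n → ZMod p) : ℂ := edgeSum wU (fun x : Fin n × Fin d => (v x.1, t x.1))

lemma SU_symm (v t : Fin n → ZMod p) : SU d v t = SU d t v := by
  unfold SU edgeSum
  apply sum_congr rfl
  intro σ hσ
  have hinv := (mem_msetU.1 hσ).1
  rw [← Equiv.prod_comp σ]
  apply prod_congr rfl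
  intro x _
  rw [hinv]; unfold wU
  simp only [mul_comm]

lemma SU_norm (v t : Fin n → ZMod p) : ‖SU d v t‖ ≤ (msetU (univ : Finset (Fin n × Fin d))).card := by
  unfold SU edgeSum
  refine (norm_sum_le _ _).trans ?_
  rw [card_eq_sum_ones, Nat.cast_sum]
  apply sum_le_sum
  intro σ _
  rw [norm_prod]
  simp [wU]

lemma char_sum_prod {ι : Type} (s : Finset ι) (g : ι → ZMod p) :
    ZMod.stdAddChar (N := p) (∑ i ∈ s, g i) = ∏ i ∈ s, ZMod.stdAddChar (N := p) (g i) := by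
  classical
  induction s using Finset.induction_on with
  | empty => simp
  | insert a s ha ih => rw [sum_insert ha, prod_insert ha, AddChar.map_add_eq_mul, ih]

lemma SU_fourier (v : Fin n → ZMod p) : 
    ∑ t, SU d v t = (p:ℂ)^n * (((msetU (univ : Finset (Fin n × Fin d))).filter (fun σ => kerU σ v)).card : ℂ) := by
  unfold SU edgeSum
  rw [sum_comm, card_filter, Nat.cast_sum, mul_sum]
  apply sum_congr rfl
  intro σ _
  have h1 : ∀ t : Fin n → ZMod p, ∏ x : Fin n × Fin d, wU (v x.1, t x.1) (v (σ x).1, t (σ x).1) =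
      ∏ k, ZMod.stdAddChar (N := p) (t k * ∑ i : Fin d, v (σ (k, i)).1) := by
    intro t
    rw [Fintype.prod_prod_type]
    apply prod_congr rfl
    intro k _
    rw [mul_sum, char_sum_prod]
    rfl
  simp_rw [h1]
  have h2 : ∑ t : Fin n → ZMod p, ∏ k, ZMod.stdAddChar (N := p) (t k * ∑ i : Fin d, v (σ (k, i)).1) = 
      ∏ k, ∑ t : ZMod p, ZMod.stdAddChar (N := p) (t * ∑ i : Fin d, v (σ (k, i)).1) := by
    rw [Finset.prod_univ_sum]; simp
  rw [h2]
  have h3 : ∀ k, ∑ t : ZMod p, ZMod.stdAddChar (N := p) (t * ∑ i : Fin d, v (σ (k, i)).1) = 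
      if ∑ i : Fin d, v (σ (k, i)).1 = 0 then (p:ℂ) else 0 := by
    intro k
    rw [AddChar.sum_mulShift _ (ZMod.isPrimitive_stdAddChar p), ZMod.card]
    split_ifs <;> simp
  simp_rw [h3]
  by_cases hk : kerU σ v
  · rw [if_pos hk]
    have : ∀ k, ∑ i : Fin d, v (σ (k, i)).1 = 0 := hk
    simp [this]
  · rw [if_neg hk]
    have hk' : ¬ ∀ k, ∑ i : Fin d, v (σ (k, i)).1 = 0 := hk
    push Not at hk'
    obtain ⟨k, hk'⟩ := hk'
    rw [prod_eq_zero (mem_univ k) (if_neg hk')]; simp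

lemma far_sum (hd : 3 ≤ d) (hn : 0 < n) (δ ρ : ℝ)
    (hρ : ∀ ν : ZMod p × ZMod p → ℝ, (∀ u, 0 ≤ ν u) → ∑ u, ν u = 1 →
    (∀ a, ∑ t, ν (a, t) ≤ 1 - δ) → (∀ t, ∑ a, ν (a, t) ≤ 1 - δ) →
    ∀ y : ZMod p × ZMod p → ℂ, (∀ u, ‖y u‖ = ν u ^ ((d - 1 : ℝ)/d)) →
      ‖∑ u, ∑ u', OmU u u' * y u * y u'‖ ≤ ρ)
    (hρ0 : 0 ≤ ρ) (F : Finset (Fin n → ZMod p))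
    (hF : ∀ v ∈ F, ∀ a, δ * n ≤ ((univ.filter (fun k => v k ≠ a)).card : ℝ)) :
    ∑ v ∈ F, ∑ t ∈ F, ‖SU d v t‖ ≤ (msetU (univ : Finset (Fin n × Fin d))).card * ρ ^ (n * d / 2) * 
       ((Real.exp 1 * ((n * d : ℕ) + 1)) ^ (p^2)) * ((n:ℝ) + 1) ^ (p^2) := by
  have hC : Fintype.card (ZMod p × ZMod p) = p^2 := by
    rw [Fintype.card_prod, ZMod.card]; ring
  set B : ℝ := (msetU (univ : Finset (Fin n × Fin d))).card * ρ ^ (n * d / 2) * 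
       ((Real.exp 1 * ((n * d : ℕ) + 1)) ^ (p^2)) with hB
  have hB0 : 0 ≤ B := by positivity
  let P : (Fin n → ZMod p × ZMod p) → ℝ := fun u => ∏ b, ((typeU u b : ℝ) / n) ^ typeU u b
  have hP0 : ∀ u, 0 ≤ P u := fun u => prod_nonneg fun b _ => by positivity
  calc _ ≤ ∑ v ∈ F, ∑ t ∈ F, B * P (fun k => (v k, t k)) := by
        refine sum_le_sum fun v hv => sum_le_sum fun t ht => ?_
        exact far_term hd hn δ ρ hρ hρ0 (fun k => (v k, t k)) (hF v hv) (hF t ht)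
    _ ≤ ∑ v : Fin n → ZMod p, ∑ t : Fin n → ZMod p, B * P (fun k => (v k, t k)) := by
        refine le_trans (sum_le_sum fun v _ => sum_le_sum_of_subset_of_nonneg (subset_univ _) ?_) 
          (sum_le_sum_of_subset_of_nonneg (subset_univ _) ?_)
        · intro t _ _; exact mul_nonneg hB0 (hP0 _)
        · intro t _ _; exact sum_nonneg fun v _ => mul_nonneg hB0 (hP0 _)
    _ = ∑ u : Fin n → ZMod p × ZMod p, B * P u := by
        rw [← Fintype.sum_prod_type']
        exact Equiv.sum_comp (Equiv.arrowProdEquivProdArrow (Fin n) (fun _ => ZMod p) (fun _ => ZMod p)).symm (fun u => B * P u)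
    _ ≤ B * ((n:ℝ) + 1) ^ (p^2) := by
        rw [← mul_sum, ← hC]
        exact mul_le_mul_of_nonneg_left (sum_type_prod n hn) hB0

end Final

section Final2
variable {p : ℕ} [Fact p.Prime] {n d : ℕ}

lemma second_moment (hd : 3 ≤ d) (hgcd : Nat.gcd p d = 1) (hn : 0 < n) (K δ ρ : ℝ)
    (hK : K = 162 * d * p) (hδ : δ = 1 / (8 * d * K^2))
    (hρ : ∀ ν : ZMod p × ZMod p → ℝ, (∀ u, 0 ≤ ν u) → ∑ u, ν u = 1 →
    (∀ a, ∑ t, ν (a, t) ≤ 1 - δ) → (∀ t, ∑ a, ν (a, t) ≤ 1 - δ) →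
    ∀ y : ZMod p × ZMod p → ℂ, (∀ u, ‖y u‖ = ν u ^ ((d - 1 : ℝ)/d)) →
      ‖∑ u, ∑ u', OmU u u' * y u * y u'‖ ≤ ρ)
    (hρ0 : 0 ≤ ρ) :
    ∑ v : Fin n → ZMod p, (((msetU (univ : Finset (Fin n × Fin d))).filter (fun σ => kerU σ v)).card : ℝ) ≤
      (msetU (univ : Finset (Fin n × Fin d))).card * (2 * (1 + 4 * K * Real.sqrt (2 * d / n)) + 
        ρ ^ (n * d / 2) / (p:ℝ)^n * (((Real.exp 1 * ((n * d : ℕ) + 1)) ^ (p^2)) * ((n:ℝ) + 1) ^ (p^2)) + 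
        (p * (121/100 : ℝ) ^ n)^2 / (p:ℝ)^n) := by
  classical
  have hp0 : (0:ℝ) < p := by exact_mod_cast (Fact.out : p.Prime).pos
  have hpn : (0:ℝ) < (p:ℝ)^n := by positivity
  set Mc : ℝ := ((msetU (univ : Finset (Fin n × Fin d))).card : ℝ) with hMc
  have hMc0 : 0 ≤ Mc := Nat.cast_nonneg _
  set A : Finset (Fin n → ZMod p) := univ.filter (fun v => ∃ a, ((univ.filter (fun k => v k ≠ a)).card : ℝ) ≤ δ * n) with hA
  set f : (Fin n → ZMod p) → ℝ := fun v =>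
    (((msetU (univ : Finset (Fin n × Fin d))).filter (fun σ => kerU σ v)).card : ℝ) with hf
  have hnear : ∑ v ∈ A, f v ≤ Mc * (1 + 4 * K * Real.sqrt (2 * d / n)) :=
    near_sum hd hgcd K hK δ hδ hn
  have hf0 : ∀ v, 0 ≤ f v := fun v => Nat.cast_nonneg _
  have hfour : ∀ v, ∑ t, SU d v t = ((((p:ℝ)^n * f v : ℝ)) : ℂ) := by
    intro v; rw [SU_fourier]; simp only [hf]; push_cast; rfl
  have hfour' : ∀ t, ∑ v, SU d v t = ((((p:ℝ)^n * f t : ℝ)) : ℂ) := by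
    intro t; rw [← hfour]; exact sum_congr rfl fun v _ => SU_symm v t
  have hF : ∀ v ∈ Aᶜ, ∀ a, δ * n ≤ ((univ.filter (fun k => v k ≠ a)).card : ℝ) := by
    intro v hv a
    rw [mem_compl, hA, mem_filter] at hv
    push Not at hv
    exact (hv (mem_univ v) a).le
  have hFF := far_sum hd hn δ ρ hρ hρ0 Aᶜ hF
  have hAc : (A.card : ℝ) ≤ p * (121/100 : ℝ) ^ n := near_count K δ hd hK hδ
  have hfar : (((p:ℝ)^n * ∑ v ∈ Aᶜ, f v : ℝ) : ℂ) = ∑ v ∈ Aᶜ, ∑ t ∈ Aᶜ, SU d v t + 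
      ((((p:ℝ)^n * ∑ t ∈ A, f t : ℝ)) : ℂ) - ∑ t ∈ A, ∑ v ∈ A, SU d v t := by
    rw [mul_sum, mul_sum, Complex.ofReal_sum, Complex.ofReal_sum]
    simp_rw [← hfour]
    have e1 : ∀ v, ∑ t, SU d v t = ∑ t ∈ Aᶜ, SU d v t + ∑ t ∈ A, SU d v t := fun v => (sum_compl_add_sum A _).symm
    have e2 : ∑ t ∈ A, ∑ t', SU d t t' = ∑ t ∈ A, (∑ v ∈ Aᶜ, SU d v t + ∑ v ∈ A, SU d v t) := by
      apply sum_congr rfl; intro t _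
      rw [sum_compl_add_sum A (fun v => SU d v t)]
      exact sum_congr rfl fun v _ => SU_symm t v
    rw [e2]
    simp_rw [e1]
    rw [sum_add_distrib, sum_add_distrib]
    rw [sum_comm (s := A) (t := Aᶜ)]
    ring
  have hnorm : (p:ℝ)^n * ∑ v ∈ Aᶜ, f v ≤ ∑ v ∈ Aᶜ, ∑ t ∈ Aᶜ, ‖SU d v t‖ + (p:ℝ)^n * ∑ t ∈ A, f t + 
      (A.card : ℝ)^2 * Mc := by
    have h0 : ‖(((p:ℝ)^n * ∑ v ∈ Aᶜ, f v : ℝ) : ℂ)‖ = (p:ℝ)^n * ∑ v ∈ Aᶜ, f v := by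
      rw [Complex.norm_real, Real.norm_of_nonneg]
      exact mul_nonneg hpn.le (sum_nonneg fun v _ => hf0 v)
    rw [← h0, hfar]
    refine (norm_sub_le _ _).trans (add_le_add ((norm_add_le _ _).trans (add_le_add ?_ ?_)) ?_)
    · exact (norm_sum_le _ _).trans (sum_le_sum fun v _ => norm_sum_le _ _)
    · rw [Complex.norm_real, Real.norm_of_nonneg]
      exact mul_nonneg hpn.le (sum_nonneg fun v _ => hf0 v)
    · refine (norm_sum_le _ _).trans ((sum_le_sum fun v _ => (norm_sum_le _ _).trans (sum_le_sum fun t _ => SU_norm t v)).trans ?_)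
      rw [sum_const, sum_const, nsmul_eq_mul, nsmul_eq_mul]
      apply le_of_eq; ring
  have hsq : (A.card : ℝ)^2 ≤ (p * (121/100 : ℝ) ^ n)^2 := by gcongr
  rw [← sum_compl_add_sum A f]
  have hfin : ∑ v ∈ Aᶜ, f v ≤ Mc * (1 + 4 * K * Real.sqrt (2 * d / n)) + 
      Mc * (ρ ^ (n * d / 2) / (p:ℝ)^n * (((Real.exp 1 * ((n * d : ℕ) + 1)) ^ (p^2)) * ((n:ℝ) + 1) ^ (p^2))) + 
      Mc * ((p * (121/100 : ℝ) ^ n)^2 / (p:ℝ)^n) := by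
    rw [← mul_le_mul_iff_right₀ hpn]
    refine hnorm.trans ?_
    have e1 := mul_le_mul_of_nonneg_left hnear hpn.le
    have e2 := mul_le_mul_of_nonneg_right hsq hMc0
    have e3 : (p:ℝ)^n * (Mc * (1 + 4 * K * Real.sqrt (2 * d / n)) + 
      Mc * (ρ ^ (n * d / 2) / (p:ℝ)^n * (((Real.exp 1 * ((n * d : ℕ) + 1)) ^ (p^2)) * ((n:ℝ) + 1) ^ (p^2))) + 
      Mc * ((p * (121/100 : ℝ) ^ n)^2 / (p:ℝ)^n)) = 
      Mc * ρ ^ (n * d / 2) * ((Real.exp 1 * ((n * d : ℕ) + 1)) ^ (p^2)) * ((n:ℝ) + 1) ^ (p^2) + 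
      (p:ℝ)^n * (Mc * (1 + 4 * K * Real.sqrt (2 * d / n))) + (p * (121/100 : ℝ) ^ n)^2 * Mc := by
      field_simp; ring
    rw [e3]
    linarith
  linarith

lemma det_ker (σ : Equiv.Perm (Fin n × Fin d)) 
    (h : ((adjMat n d σ).map (Int.cast : ℤ → ZMod p)).det = 0) : ∃ v : Fin n → ZMod p, v ≠ 0 ∧ kerU σ v := by
  obtain ⟨v, hv, hmv⟩ := Matrix.exists_mulVec_eq_zero_iff.2 h
  refine ⟨v, hv, fun k => ?_⟩
  have := congrFun hmv k
  simp only [Matrix.mulVec, dotProduct, Matrix.map_apply, adjMat, Pi.zero_apply] at this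
  rw [← this, ← sum_fiberwise_of_maps_to (s := univ) (t := univ) (g := fun i : Fin d => (σ (k, i)).1) (fun _ _ => mem_univ _)]
  apply sum_congr rfl
  intro l _
  rw [sum_congr rfl (g := fun _ => v l) (fun i hi => by rw [(mem_filter.1 hi).2]), sum_const, nsmul_eq_mul]
  simp

lemma ker_card (σ : Equiv.Perm (Fin n × Fin d)) (v : Fin n → ZMod p) (hv : v ≠ 0) (hk : kerU σ v) :
    p ≤ (univ.filter (fun v : Fin n → ZMod p => kerU σ v)).card := by
  have : (univ.image (fun a : ZMod p => a • v)).card = p := by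
    rw [card_image_of_injective, card_univ, ZMod.card]
    intro a b hab
    exact smul_left_injective _ hv hab
  refine this.symm.le.trans (card_le_card ?_)
  intro w hw
  obtain ⟨a, _, rfl⟩ := mem_image.1 hw
  rw [mem_filter]
  refine ⟨mem_univ _, fun k => ?_⟩
  simp only [Pi.smul_apply, smul_eq_mul]
  rw [← mul_sum, hk k, mul_zero]

lemma sing_bound : 
    ((p:ℝ) - 1) * ((univ.filter (fun σ : Equiv.Perm (Fin n × Fin d) =>
          (∀ x, σ (σ x) = x) ∧ (∀ x, σ x ≠ x) ∧
          ((adjMat n d σ).map (Int.cast : ℤ → ZMod p)).det = 0)).card : ℝ) + (msetU (univ : Finset (Fin n × Fin d))).card ≤ 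
    ∑ v : Fin n → ZMod p, (((msetU (univ : Finset (Fin n × Fin d))).filter (fun σ => kerU σ v)).card : ℝ) := by
  have hp1 : (1:ℝ) ≤ p := by exact_mod_cast (Fact.out : p.Prime).one_lt.le
  set M := msetU (univ : Finset (Fin n × Fin d)) with hM
  have e1 : (univ.filter (fun σ : Equiv.Perm (Fin n × Fin d) =>
          (∀ x, σ (σ x) = x) ∧ (∀ x, σ x ≠ x) ∧
          ((adjMat n d σ).map (Int.cast : ℤ → ZMod p)).det = 0)) = 
       M.filter (fun σ => ((adjMat n d σ).map (Int.cast : ℤ → ZMod p)).det = 0) := by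
    ext σ
    simp [hM, mem_msetU, and_assoc]
  rw [e1]
  have e2 : ∑ v : Fin n → ZMod p, ((M.filter (fun σ => kerU σ v)).card : ℝ) = 
      ∑ σ ∈ M, ((univ.filter (fun v : Fin n → ZMod p => kerU σ v)).card : ℝ) := by
    simp_rw [card_filter, Nat.cast_sum]
    rw [sum_comm]
  rw [e2, card_filter, Nat.cast_sum, mul_sum, card_eq_sum_ones, Nat.cast_sum, ← sum_add_distrib]
  apply sum_le_sum
  intro σ _
  by_cases h : ((adjMat n d σ).map (Int.cast : ℤ → ZMod p)).det = 0
  · rw [if_pos h]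
    obtain ⟨v, hv, hk⟩ := det_ker σ h
    have : (p:ℝ) ≤ _ := Nat.cast_le.2 (ker_card σ v hv hk)
    push_cast
    linarith
  · rw [if_neg h]
    have : 1 ≤ (univ.filter (fun v : Fin n → ZMod p => kerU σ v)).card := by
      apply card_pos.2
      exact ⟨0, mem_filter.2 ⟨mem_univ _, fun k => by simp⟩⟩
    have : (1:ℝ) ≤ ((univ.filter (fun v : Fin n → ZMod p => kerU σ v)).card : ℝ) := by exact_mod_cast this
    push_cast
    linarith

end Final2

open Filter Topology in
lemma error_tendsto (p d : ℕ) (hp : 3 ≤ p) (K q : ℝ) (hq0 : 0 ≤ q) (hq1 : q < 1) :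
    Tendsto (fun n : ℕ => 8 * K * Real.sqrt (2 * d / n) + 
      (6 * d * 2 : ℝ)^(p^2) * ((n:ℝ)^(2 * p^2) * q ^ n) + (p:ℝ)^2 * (1.4641/3 : ℝ)^n) atTop (𝓝 0) := by
  have h1 : Tendsto (fun n : ℕ => 8 * K * Real.sqrt (2 * d / n)) atTop (𝓝 0) := by
    have a : Tendsto (fun n : ℕ => (2 * d : ℝ) / n) atTop (𝓝 0) := tendsto_const_div_atTop_nhds_zero_nat _
    have b := (Real.continuous_sqrt.tendsto 0).comp a
    rw [Real.sqrt_zero] at b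
    simpa using b.const_mul (8 * K)
  have h2 : Tendsto (fun n : ℕ => (6 * d * 2 : ℝ)^(p^2) * ((n:ℝ)^(2 * p^2) * q ^ n)) atTop (𝓝 0) := by
    have := tendsto_pow_const_mul_const_pow_of_abs_lt_one (2 * p^2) (r := q) (by rw [abs_of_nonneg hq0]; exact hq1)
    simpa using this.const_mul ((6 * d * 2 : ℝ)^(p^2))
  have h3 : Tendsto (fun n : ℕ => (p:ℝ)^2 * (1.4641/3 : ℝ)^n) atTop (𝓝 0) := by
    have := tendsto_pow_atTop_nhds_zero_of_lt_one (r := (1.4641/3 : ℝ)) (by norm_num) (by norm_num)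
    simpa using this.const_mul ((p:ℝ)^2)
  simpa using (h1.add h2).add h3

theorem undirected_singular_Fp (d : ℕ) (hd : 3 ≤ d) (p : ℕ) [Fact p.Prime] (hp : Odd p)
    (hgcd : Nat.gcd p d = 1) (ε : ℝ) (hε : 0 < ε) :
    ∃ N : ℕ, ∀ n : ℕ, N ≤ n → Even (n * d) →
      ((Finset.univ.filter (fun σ : Equiv.Perm (Fin n × Fin d) =>
          (∀ x, σ (σ x) = x) ∧ (∀ x, σ x ≠ x) ∧
          ((adjMat n d σ).map (Int.cast : ℤ → ZMod p)).det = 0)).card : ℝ)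
        ≤ (1 + ε) / ((p : ℝ) - 1) *
            (((n * d).factorial : ℝ) / ((2 : ℝ) ^ (n * d / 2) * ((n * d / 2).factorial : ℝ))) := by
  have hpr := (Fact.out : p.Prime)
  have hp3 : 3 ≤ p := by
    have := hpr.two_le
    rcases hp with ⟨k, hk⟩
    omega
  have hp3R : (3:ℝ) ≤ p := by exact_mod_cast hp3
  have hd0 : (3:ℝ) ≤ d := by exact_mod_cast hd
  set K : ℝ := 162 * d * p with hK
  set δ : ℝ := 1 / (8 * d * K^2) with hδ
  have hδ0 : 0 < δ := by rw [hδ, hK]; positivity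
  obtain ⟨ρ, hρ0, hρ1, hρ⟩ := analytic_unif hp d hd δ hδ0
  have hP : (0:ℝ) < (p:ℝ) ^ ((2:ℝ)/d) := by positivity
  set q : ℝ := ρ / (p:ℝ) ^ ((2:ℝ)/d) with hq
  have hq0 : 0 ≤ q := by positivity
  have hq1 : q < 1 := (div_lt_one hP).2 hρ1
  have hev := (error_tendsto p d hp3 K q hq0 hq1).eventually (gt_mem_nhds hε)
  obtain ⟨N, hN⟩ := Filter.eventually_atTop.1 hev
  refine ⟨max N 1, fun n hn heven => ?_⟩
  have hn1 : 1 ≤ n := le_of_max_le_right hn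
  have hn1R : (1:ℝ) ≤ n := by exact_mod_cast hn1
  have herr := hN n (le_of_max_le_left hn)
  obtain ⟨h, hh⟩ := heven
  have hh2 : n * d = 2 * h := by omega
  have hdiv : n * d / 2 = h := by omega
  have hnh : n ≤ h := by nlinarith
  have hsm := second_moment (n := n) hd hgcd hn1 K δ ρ hK hδ hρ hρ0
  have hsb := sing_bound (p := p) (n := n) (d := d)
  have hM : ((msetU (univ : Finset (Fin n × Fin d))).card : ℝ) = 
      (((n * d).factorial : ℝ) / ((2 : ℝ) ^ (n * d / 2) * ((n * d / 2).factorial : ℝ))) := by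
    rw [card_msetU, card_univ, Fintype.card_prod, Fintype.card_fin, Fintype.card_fin, hdiv, hh2, eq_div_iff (by positivity)]
    exact_mod_cast mcountU_formula h
  rw [← hM]
  set Mc : ℝ := ((msetU (univ : Finset (Fin n × Fin d))).card : ℝ) with hMc
  have hMc0 : 0 ≤ Mc := Nat.cast_nonneg _
  have hE : 2 * (1 + 4 * K * Real.sqrt (2 * d / n)) + 
        ρ ^ (n * d / 2) / (p:ℝ)^n * (((Real.exp 1 * ((n * d : ℕ) + 1)) ^ (p^2)) * ((n:ℝ) + 1) ^ (p^2)) + 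
        (p * (121/100 : ℝ) ^ n)^2 / (p:ℝ)^n ≤ 2 + ε := by
    have b1 : ρ ^ (n * d / 2) / (p:ℝ)^n ≤ q ^ n := by
      have : (p:ℝ)^n = ((p:ℝ) ^ ((2:ℝ)/d)) ^ h := by
        rw [← Real.rpow_natCast _ h, ← Real.rpow_mul (by positivity), ← Real.rpow_natCast]
        congr 1
        have : (n:ℝ) * d = 2 * h := by exact_mod_cast hh2
        field_simp
        linarith
      rw [this, hdiv, ← div_pow, ← hq]
      exact pow_le_pow_of_le_one hq0 hq1.le hnh
    have b2 : ((Real.exp 1 * ((n * d : ℕ) + 1)) ^ (p^2)) * ((n:ℝ) + 1) ^ (p^2) ≤ (6 * d * 2 : ℝ)^(p^2) * (n:ℝ)^(2 * p^2) := by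
      rw [pow_mul (n:ℝ), ← mul_pow, ← mul_pow]
      apply pow_le_pow_left₀ (by positivity)
      have c1 : Real.exp 1 ≤ 3 := by linarith [Real.exp_one_lt_d9]
      have c2 : ((n * d : ℕ) : ℝ) + 1 ≤ 2 * (n * d) := by push_cast; nlinarith
      calc Real.exp 1 * ((n * d : ℕ) + 1) * ((n:ℝ) + 1) ≤ 3 * (2 * (n * d)) * (2 * n) := by
            gcongr
            linarith
        _ = _ := by ring
    have b3 : (p * (121/100 : ℝ) ^ n)^2 / (p:ℝ)^n ≤ (p:ℝ)^2 * (1.4641/3 : ℝ)^n := by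
      have : (p * (121/100 : ℝ) ^ n)^2 / (p:ℝ)^n = (p:ℝ)^2 * (1.4641 / p)^n := by
        rw [mul_pow, ← pow_mul, mul_comm n 2, pow_mul, mul_div_assoc, ← div_pow]; norm_num
      rw [this]
      gcongr
    have b4 : ρ ^ (n * d / 2) / (p:ℝ)^n * (((Real.exp 1 * ((n * d : ℕ) + 1)) ^ (p^2)) * ((n:ℝ) + 1) ^ (p^2)) ≤ 
       (6 * d * 2 : ℝ)^(p^2) * ((n:ℝ)^(2 * p^2) * q ^ n) := by
      calc _ ≤ q ^ n * ((6 * d * 2 : ℝ)^(p^2) * (n:ℝ)^(2 * p^2)) := by gcongr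
        _ = _ := by ring
    linarith
  have hpm : (0:ℝ) < (p:ℝ) - 1 := by linarith
  have := mul_le_mul_of_nonneg_left hE hMc0
  rw [div_mul_eq_mul_div, le_div_iff₀ hpm]
  linarith
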